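/- arXiv:2505.20284 — 4 statements merged into one kernel-verified Lean document; each statement's English description precedes it below -/
import Mathlib

section
/- Let Φ be a t-uniform purified code state, T ⊆ {1,…,n} with |T| = t, and U a T-standard-form unitary for Φ. Then for every j ∈ {1,…,t} there exists a unitary V on ℂ^{Q^{t−1}} ⊗ ℂ^Q such that for all s' ∈ {0,…,Q−1}^{t−1}: Q^{−1/2} Σ_{r ∈ {0,…,Q−1}} U(e_{s'} ⊗ e_r) ⊗ e_r (a vector in (ℂ^Q)^{⊗(t+1)}, with U(e_{s'} ⊗ e_r) on qudits 1,…,t and e_r on qudit t+1) equals Q^{−1/2} Σ_{f ∈ {0,…,Q−1}} σ_j( V(e_{s'} ⊗ e_f) ⊗ e_f ), where σ_j is the permutation of the t+1 tensor factors that places the t qudits of V(e_{s'} ⊗ e_f) on positions {1,…,t+1}∖{j} (in increasing order) and the factor e_f on position j. In other words, the logical content of the [[t+1,t−1]]_Q code with codewords ω_{s'} = Q^{−1/2} Σ_r U(e_{s'} ⊗ e_r) ⊗ e_r can be recovered from any t of its t+1 physical qudits by a unitary acting only on those t qudits (the recovery identity in the proof of Lemma 2.6). -/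
open scoped BigOperators

noncomputable section

/-- Combine an assignment on `A` with an assignment on the complement of `A`
into a full computational-basis string. -/
def mergeOn {n Q : ℕ} (A : Finset (Fin n)) (u : {i // i ∈ A} → Fin Q)
    (v : {i // i ∉ A} → Fin Q) : Fin n → Fin Q :=
  fun i => if h : i ∈ A then u ⟨i, h⟩ else v ⟨i, h⟩

/-- Reduced density matrix of a purified code state `Φ` on the qudits in `A`
(the reference register and the qudits outside `A` are traced out). -/
def rdm {Q k n : ℕ} (Φ : (Fin k → Fin Q) → (Fin n → Fin Q) → ℂ)
    (A : Finset (Fin n)) :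
    Matrix ({i // i ∈ A} → Fin Q) ({i // i ∈ A} → Fin Q) ℂ :=
  Matrix.of fun u v => ∑ s : Fin k → Fin Q, ∑ w : {i // i ∉ A} → Fin Q,
    Φ s (mergeOn A u w) * (starRingEnd ℂ) (Φ s (mergeOn A v w))

/-- `Φ` is `t`-uniform: every set of `t` qudits is maximally mixed. -/
def TUniform {Q k n : ℕ} (t : ℕ)
    (Φ : (Fin k → Fin Q) → (Fin n → Fin Q) → ℂ) : Prop :=
  ∀ A : Finset (Fin n), A.card = t →
    rdm Φ A = ((Q : ℂ) ^ t)⁻¹ •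
      (1 : Matrix ({i // i ∈ A} → Fin Q) ({i // i ∈ A} → Fin Q) ℂ)


/-- The codewords `ω_{s'} = Q^{-1/2} Σ_r U(e_{s'} ⊗ e_r) ⊗ e_r` of the induced
`[[t+1, t-1]]_Q` code, written in amplitude form.  Here `ℂ^{Q^k} ⊗ (ℂ^Q)^{⊗(n-t-1)}` is
identified with `ℂ^{Q^{t-1}}`, so `s' : Fin (t-1) → Fin Q`, and the column index
`(s', r)` of `U` is encoded by `Fin.snoc`. -/
def omegaVec {Q t : ℕ} (ht : 1 < t) (U : Matrix (Fin t → Fin Q) (Fin t → Fin Q) ℂ)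
    (s' : Fin (t - 1) → Fin Q) : (Fin (t + 1) → Fin Q) → ℂ :=
  fun v => (Real.sqrt (Q : ℝ) : ℂ)⁻¹ *
    U (fun i => v i.castSucc)
      (fun i => Fin.snoc (α := fun _ => Fin Q) s' (v (Fin.last t)) (Fin.cast (by omega : t = t - 1 + 1) i))


theorem uniform_unitary_aux {Q k n t : ℕ} (hQ : 2 ≤ Q)
    (Φ : (Fin k → Fin Q) → (Fin n → Fin Q) → ℂ) (huniform : TUniform t Φ)
    (e : Fin k ⊕ Fin n → Fin t ⊕ Fin t) (he : Function.Bijective e)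
    (κ : Fin k → Fin t) (hκ : ∀ i, e (Sum.inl i) = Sum.inr (κ i))
    (M : Matrix (Fin t → Fin Q) (Fin t → Fin Q) ℂ)
    (hM : ∀ x c, Φ (fun i => Sum.elim x c (e (Sum.inl i)))
      (fun i => Sum.elim x c (e (Sum.inr i))) =
        (Real.sqrt ((Q : ℝ) ^ t) : ℂ)⁻¹ * M x c) :
    M ∈ Matrix.unitaryGroup (Fin t → Fin Q) ℂ := by
  classical
  let A : Finset (Fin n) := Finset.univ.filter (fun i => (e (Sum.inr i)).isLeft = true)
  have hα : ∀ i : {i // i ∈ A}, ∃ j, e (Sum.inr i.1) = Sum.inl j := by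
    rintro ⟨i, hi⟩
    have := (Finset.mem_filter.1 hi).2
    exact Sum.isLeft_iff.1 this
  have hβ : ∀ i : {i // i ∉ A}, ∃ j, e (Sum.inr i.1) = Sum.inr j := by
    rintro ⟨i, hi⟩
    have h2 : ¬ (e (Sum.inr i)).isLeft = true := fun h =>
      hi (Finset.mem_filter.2 ⟨Finset.mem_univ _, h⟩)
    rcases h3 : e (Sum.inr i) with j | j
    · simp [h3] at h2
    · exact ⟨j, rfl⟩
  choose α hα using hα
  choose β hβ using hβ
  have hαb : Function.Bijective α := by
    constructor
    · intro i j hij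
      have : e (Sum.inr i.1) = e (Sum.inr j.1) := by rw [hα, hα, hij]
      exact Subtype.ext (Sum.inr_injective (he.1 this))
    · intro j
      obtain ⟨z, hz⟩ := he.2 (Sum.inl j)
      rcases z with i | i
      · rw [hκ] at hz; cases hz
      · have hi : i ∈ A := by simp [A, hz]
        refine ⟨⟨i, hi⟩, ?_⟩
        have := hα ⟨i, hi⟩
        rw [hz] at this
        exact (Sum.inl_injective this).symm
  have hβb : Function.Bijective (Sum.elim κ β) := by
    constructor
    · rintro (i | i) (j | j) hij
      · simp only [Sum.elim_inl] at hij
        have := he.1 ((hκ i).trans ((congrArg Sum.inr hij).trans (hκ j).symm))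
        rw [Sum.inl_injective this]
      · simp only [Sum.elim_inl, Sum.elim_inr] at hij
        have := he.1 ((hκ i).trans ((congrArg Sum.inr hij).trans (hβ j).symm))
        cases this
      · simp only [Sum.elim_inl, Sum.elim_inr] at hij
        have := he.1 ((hβ i).trans ((congrArg Sum.inr hij).trans (hκ j).symm))
        cases this
      · simp only [Sum.elim_inr] at hij
        have := he.1 ((hβ i).trans ((congrArg Sum.inr hij).trans (hβ j).symm))
        rw [Subtype.ext (Sum.inr_injective this)]
    · intro j
      obtain ⟨z, hz⟩ := he.2 (Sum.inr j)
      rcases z with i | i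
      · rw [hκ] at hz
        exact ⟨Sum.inl i, Sum.inr_injective hz⟩
      · have hi : i ∉ A := by simp [A, hz]
        refine ⟨Sum.inr ⟨i, hi⟩, ?_⟩
        have := hβ ⟨i, hi⟩
        rw [hz] at this
        exact (Sum.inr_injective this).symm
  have hA : A.card = t := by
    have := Fintype.card_of_bijective hαb
    simpa using this
  have hrd := huniform A hA
  have hw : ∀ x c, M x c = (Real.sqrt ((Q : ℝ) ^ t) : ℂ) *
      Φ (fun i => c (κ i)) (mergeOn A (fun i => x (α i)) (fun i => c (β i))) := by
    intro x c
    have h0 : (Real.sqrt ((Q : ℝ) ^ t) : ℂ) ≠ 0 := by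
      have : (0 : ℝ) < Q := by exact_mod_cast (by omega : 0 < Q)
      exact_mod_cast (Real.sqrt_pos.2 (pow_pos this t)).ne'
    have h1 : (fun i => Sum.elim x c (e (Sum.inl i))) = fun i => c (κ i) := by
      funext i; rw [hκ]; rfl
    have h2 : (fun i => Sum.elim x c (e (Sum.inr i))) =
        mergeOn A (fun i => x (α i)) (fun i => c (β i)) := by
      funext i
      unfold mergeOn
      split_ifs with h
      · rw [hα ⟨i, h⟩]; rfl
      · rw [hβ ⟨i, h⟩]; rfl
    rw [← h1, ← h2, hM, mul_inv_cancel_left₀ h0]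
  have hsq : (Real.sqrt ((Q : ℝ) ^ t) : ℂ) * (Real.sqrt ((Q : ℝ) ^ t) : ℂ) = (Q : ℂ) ^ t := by
    rw [← Complex.ofReal_mul, Real.mul_self_sqrt (by positivity)]
    push_cast; rfl
  have hQ0 : (Q : ℂ) ^ t ≠ 0 := pow_ne_zero _ (by exact_mod_cast (by omega : Q ≠ 0))
  let E : (Fin t → Fin Q) ≃ (Fin k → Fin Q) × ({i // i ∉ A} → Fin Q) :=
    ((Equiv.ofBijective _ hβb).symm.arrowCongr (Equiv.refl _)).trans
      (Equiv.sumArrowEquivProdArrow _ _ _)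
  have hE : ∀ c, E c = (fun i => c (κ i), fun i => c (β i)) := fun c => rfl
  rw [Matrix.mem_unitaryGroup_iff]
  ext x y
  have key := congrFun (congrFun hrd (fun i => x (α i))) (fun i => y (α i))
  have hxy : ((fun i => x (α i)) = fun i => y (α i)) ↔ x = y := by
    constructor
    · intro h
      funext j
      obtain ⟨i, rfl⟩ := hαb.2 j
      exact congrFun h i
    · rintro rfl; rfl
  rw [Matrix.smul_apply, Matrix.one_apply] at key
  simp only [hxy] at key
  rw [Matrix.mul_apply, Matrix.one_apply]
  have hsum : ∑ c, M x c * star M c y = (Q : ℂ) ^ t *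
      rdm Φ A (fun i => x (α i)) (fun i => y (α i)) := by
    unfold rdm
    rw [Matrix.of_apply, ← Fintype.sum_prod_type', ← Equiv.sum_comp E, Finset.mul_sum]
    refine Finset.sum_congr rfl fun c _ => ?_
    rw [Matrix.star_apply, hw x c, hw y c, hE, ← hsq]
    simp only [star_mul', RCLike.star_def, Complex.conj_ofReal]
    ring
  rw [hsum, key]
  split_ifs <;> simp [hQ0]

/-- Index rearrangement from `U` to the recovery unitary. -/
def tauIdx (t p : ℕ) (hp : p < t) : Fin t ⊕ Fin t → Fin t ⊕ Fin t
  | Sum.inl j => if j.1 < p then Sum.inl j else if j.1 = p then Sum.inr ⟨t - 1, by omega⟩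
      else Sum.inl ⟨j.1 - 1, by omega⟩
  | Sum.inr j => if j.1 = t - 1 then Sum.inl j else Sum.inr j

theorem tauIdx_injective (t p : ℕ) (hp : p < t) : Function.Injective (tauIdx t p hp) := by
  rintro (⟨i, hi⟩ | ⟨i, hi⟩) (⟨j, hj⟩ | ⟨j, hj⟩) h <;> simp only [tauIdx] at h <;>
    split_ifs at h <;> simp at h <;> first | omega | (simp; omega)

/-- Index map for the standard form. -/
def stdIdx {k n t : ℕ} (hkn : t = k + (n - t)) (f : Fin n → Fin t ⊕ Fin (n - t)) :
    Fin k ⊕ Fin n → Fin t ⊕ Fin t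
  | Sum.inl i => Sum.inr (Fin.cast hkn.symm (Fin.castAdd _ i))
  | Sum.inr i => Sum.map id (fun j => Fin.cast hkn.symm (Fin.natAdd k j)) (f i)

theorem stdIdx_injective {k n t : ℕ} (hkn : t = k + (n - t)) (f : Fin n → Fin t ⊕ Fin (n - t))
    (hf : Function.Injective f) : Function.Injective (stdIdx hkn f) := by
  rintro (i | i) (j | j) h
  · simp only [stdIdx, Sum.inr.injEq, Fin.ext_iff] at h
    congr 1; ext; simpa using h
  · simp only [stdIdx] at h
    generalize f j = z at h
    rcases z with a | a
    · simp at h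
    · simp [Fin.ext_iff] at h; omega
  · simp only [stdIdx] at h
    generalize f i = z at h
    rcases z with a | a
    · simp at h
    · simp [Fin.ext_iff] at h; omega
  · simp only [stdIdx] at h
    congr 1
    apply hf
    refine Sum.map_injective.2 ⟨Function.injective_id, ?_⟩ h
    intro a b hab
    simpa [Fin.ext_iff] using hab

/-- recovery identity in the proof of Lemma 2.6.  The logical content of the
`[[t+1, t-1]]_Q` code with codewords `ω_{s'}` can be recovered from any `t` of its `t+1`
physical qudits: for every position `p` with `p ≤ t` (i.e. `p ∈ {1,…,t}`) there is a unitary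
`V` acting only on the remaining `t` qudits with
`ω_{s'} = Q^{-1/2} Σ_f σ_p (V (e_{s'} ⊗ e_f) ⊗ e_f)`, where `σ_p` places `e_f` at position `p`
and the qudits of `V(e_{s'} ⊗ e_f)` at the other positions in increasing order. -/
theorem stmt_3 (Q t n : ℕ) (hQ : 2 ≤ Q) (ht : 1 < t) (htn : t < n) (hn : n ≤ 2 * t)
    (k : ℕ) (hk : k = 2 * t - n)
    (Φ : (Fin k → Fin Q) → (Fin n → Fin Q) → ℂ)
    (hnorm : ∑ s : Fin k → Fin Q, ∑ w : Fin n → Fin Q,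
      Φ s w * (starRingEnd ℂ) (Φ s w) = 1)
    (huniform : TUniform t Φ)
    (T : Finset (Fin n)) (hT : T.card = t) (hTc : Tᶜ.card = n - t)
    (U : Matrix (Fin t → Fin Q) (Fin t → Fin Q) ℂ)
    (hUuni : U ∈ Matrix.unitaryGroup (Fin t → Fin Q) ℂ)
    (hUstd : ∀ (s : Fin k → Fin Q) (w : Fin n → Fin Q),
      Φ s w = (Real.sqrt ((Q : ℝ) ^ t) : ℂ)⁻¹ *
        U (fun i => w (T.orderEmbOfFin hT i))
          (fun i => Fin.append s (fun j => w (Tᶜ.orderEmbOfFin hTc j))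
            (Fin.cast (by omega : t = k + (n - t)) i)))
    (p : Fin (t + 1)) (hp : (p : ℕ) < t) :
    ∃ V : Matrix (Fin t → Fin Q) (Fin t → Fin Q) ℂ,
      V ∈ Matrix.unitaryGroup (Fin t → Fin Q) ℂ ∧
      ∀ (s' : Fin (t - 1) → Fin Q) (v : Fin (t + 1) → Fin Q),
        omegaVec ht U s' v = (Real.sqrt (Q : ℝ) : ℂ)⁻¹ *
          V (fun i => v (p.succAbove i))
            (fun i => Fin.snoc (α := fun _ => Fin Q) s' (v p)
              (Fin.cast (by omega : t = t - 1 + 1) i)) := by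
  have hkn : t = k + (n - t) := by omega
  let F := (finSumEquivOfFinset hT hTc)
  let τ := tauIdx t p hp
  let e : Fin k ⊕ Fin n → Fin t ⊕ Fin t := fun z => τ (stdIdx hkn F.symm z)
  have heinj : Function.Injective e :=
    (tauIdx_injective t p hp).comp (stdIdx_injective hkn _ F.symm.injective)
  have heb : Function.Bijective e := by
    rw [Fintype.bijective_iff_injective_and_card]
    refine ⟨heinj, ?_⟩
    simp only [Fintype.card_sum, Fintype.card_fin]
    omega
  let V : Matrix (Fin t → Fin Q) (Fin t → Fin Q) ℂ := fun x c =>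
    U (fun j => Sum.elim x c (τ (Sum.inl j))) (fun j => Sum.elim x c (τ (Sum.inr j)))
  refine ⟨V, ?_, ?_⟩
  · refine uniform_unitary_aux hQ Φ huniform e heb
      (fun i => Fin.cast hkn.symm (Fin.castAdd _ i)) ?_ V ?_
    · intro i
      simp only [e, τ, stdIdx, tauIdx]
      rw [if_neg]
      simp
      omega
    · intro x c
      rw [hUstd]
      congr 1
      have hF1 : ∀ i, F.symm (T.orderEmbOfFin hT i) = Sum.inl i := by
        intro i
        rw [Equiv.symm_apply_eq]
        exact (finSumEquivOfFinset_inl hT hTc i).symm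
      have hF2 : ∀ i, F.symm (Tᶜ.orderEmbOfFin hTc i) = Sum.inr i := by
        intro i
        rw [Equiv.symm_apply_eq]
        exact (finSumEquivOfFinset_inr hT hTc i).symm
      simp only [V]
      congr 1
      · funext i
        simp only [e, stdIdx, hF1, Sum.map_inl, id]
      · funext i
        obtain ⟨i', rfl⟩ : ∃ i', i = Fin.cast hkn.symm i' := ⟨Fin.cast hkn i, rfl⟩
        simp only [Fin.cast_cast, Fin.cast_eq_self]
        induction i' using Fin.addCases with
        | left i' => rw [Fin.append_left]; rfl
        | right i' =>
          rw [Fin.append_right]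
          simp only [e, stdIdx, hF2, Sum.map_inr]
  · intro s' v
    unfold omegaVec
    congr 1
    simp only [V]
    congr 1
    · funext j
      simp only [τ, tauIdx]
      split_ifs with h1 h2
      · simp only [Sum.elim_inl]
        congr 1
        rw [Fin.succAbove_of_castSucc_lt]
        exact h1
      · simp only [Sum.elim_inr]
        have : (Fin.cast (by omega : t = t - 1 + 1) (⟨t - 1, by omega⟩ : Fin t)) =
            Fin.last (t - 1) := rfl
        rw [this, Fin.snoc_last]
        congr 1
        exact Fin.ext h2
      · simp only [Sum.elim_inl]
        congr 1
        rw [Fin.succAbove_of_le_castSucc]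
        · ext; simp; omega
        · rw [Fin.le_def]; simp; omega
    · funext j
      simp only [τ, tauIdx]
      split_ifs with h1
      · have : (Fin.cast (by omega : t = t - 1 + 1) j) = Fin.last (t - 1) := Fin.ext h1
        rw [this, Fin.snoc_last, Sum.elim_inl]
        congr 1
        rw [Fin.succAbove_of_le_castSucc]
        · ext; simp; omega
        · rw [Fin.le_def]; simp; omega
      · have : (Fin.cast (by omega : t = t - 1 + 1) j) =
          Fin.castSucc (⟨j.1, by omega⟩ : Fin (t - 1)) := rfl
        rw [Sum.elim_inr, this, Fin.snoc_castSucc, Fin.snoc_castSucc]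
end
end

section
/- Let Φ be a t-uniform purified code state with t ≥ 2, let T ⊆ {1,…,n−1} with |T| = t (qudit n is the last coordinate of T^c), and let U be a T-standard-form unitary for Φ. Let G_1,…,G_{n−t−1} be any unitaries on ℂ^Q, ε ∈ ℂ^Q a unit vector, and Ū the entrywise complex conjugate of U. Define ψ_out := Q^{−t/2} Σ_{s ∈ {0,…,Q−1}^k} Σ_{r ∈ {0,…,Q−1}^{n−t}} U(e_s ⊗ e_{r_1} ⊗ ⋯ ⊗ e_{r_{n−t}}) ⊗ e_{r_{n−t}} ⊗ Ū(e_s ⊗ G_1^† e_{r_1} ⊗ ⋯ ⊗ G_{n−t−1}^† e_{r_{n−t−1}} ⊗ ε), a state on 2t+1 qudits: t qudits W_1,…,W_t carrying the first factor, one qudit Ŵ, and t qudits W_1',…,W_t' carrying the last factor (where ℂ^{Q^k} ⊗ (ℂ^Q)^{⊗(n−t)} is identified with (ℂ^Q)^{⊗t}). Then for every j ∈ {1,…,t}, the Schmidt rank of ψ_out across the bipartition ({W_j, W_j'} | all other qudits) equals Q² (Lemma 3.6). -/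
open scoped BigOperators

noncomputable section

/-- The state `ψ_out` of Lemma 3.6, in amplitude form, with
`ℂ^{Q^k} ⊗ (ℂ^Q)^{⊗(n-t)}` identified with `(ℂ^Q)^{⊗t}` (via `Fin.append` and the
equality `h1 : t = k + (n - t)`). Registers: the `t` qudits `W_1,…,W_t` (index `a`), the
replacement qudit `Ŵ` (index `x`), and the `t` qudits `W_1',…,W_t'` (index `b`).
`ψ_out = Q^{-t/2} Σ_{s,r} U(e_s ⊗ e_{r_1} ⊗ ⋯ ⊗ e_{r_{n-t}}) ⊗ e_{r_{n-t}} ⊗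
Ū(e_s ⊗ G_1† e_{r_1} ⊗ ⋯ ⊗ G_{n-t-1}† e_{r_{n-t-1}} ⊗ ε)`, where `Ū` is the entrywise
conjugate of `U` and `lst` is the last coordinate of `Fin (n - t)`. -/
def psiOutStd (Q t n k : ℕ) (h1 : t = k + (n - t))
    (U : Matrix (Fin t → Fin Q) (Fin t → Fin Q) ℂ)
    (G : Fin (n - t - 1) → Matrix (Fin Q) (Fin Q) ℂ)
    (ε : Fin Q → ℂ) (lst : Fin (n - t)) :
    (Fin t → Fin Q) → Fin Q → (Fin t → Fin Q) → ℂ :=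
  fun a x b =>
    (Real.sqrt ((Q : ℝ) ^ t) : ℂ)⁻¹ *
      ∑ s : Fin k → Fin Q, ∑ r : Fin (n - t) → Fin Q, ∑ y : Fin (n - t) → Fin Q,
        U a (fun i => Fin.append s r (Fin.cast h1 i)) * (if r lst = x then 1 else 0) *
          (starRingEnd ℂ) (U b (fun i => Fin.append s y (Fin.cast h1 i))) *
          ∏ i : Fin (n - t),
            if h : (i : ℕ) < n - t - 1 then (starRingEnd ℂ) ((G ⟨i, h⟩) (r i) (y i))
            else ε (y i)

/-- Insert the value `x` at the position `j` of a partial assignment defined away from `j`. -/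
def insAt {Q t : ℕ} (j : Fin t) (x : Fin Q) (a : {i : Fin t // i ≠ j} → Fin Q) :
    Fin t → Fin Q :=
  fun i => if h : i = j then x else a ⟨i, h⟩

theorem aux_row {Q k n t : ℕ} (hQ : 2 ≤ Q) (Φ : (Fin k → Fin Q) → (Fin n → Fin Q) → ℂ)
    (hu : TUniform t Φ) (A : Finset (Fin n)) (hA : A.card = t)
    (c : ({i // i ∈ A} → Fin Q) → ℂ)
    (h : ∀ s w, ∑ u, c u * Φ s (mergeOn A u w) = 0) : c = 0 := by
  have hr := hu A hA
  have hQ0 : ((Q : ℂ) ^ t)⁻¹ ≠ 0 := by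
    apply inv_ne_zero; apply pow_ne_zero; exact_mod_cast (by omega : Q ≠ 0)
  funext v
  have h1 : ∑ u, c u * rdm Φ A u v = 0 := by
    have : ∑ u, c u * rdm Φ A u v = ∑ s, ∑ w, (∑ u, c u * Φ s (mergeOn A u w)) *
        (starRingEnd ℂ) (Φ s (mergeOn A v w)) := by
      simp only [rdm, Matrix.of_apply, Finset.mul_sum, Finset.sum_mul]
      rw [Finset.sum_comm]
      refine Finset.sum_congr rfl fun s _ => ?_
      rw [Finset.sum_comm]
      refine Finset.sum_congr rfl fun w _ => Finset.sum_congr rfl fun u _ => by ring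
    rw [this]
    simp [h]
  rw [hr] at h1
  simp only [Matrix.smul_apply, Matrix.one_apply, smul_eq_mul, mul_ite, mul_one, mul_zero,
    Finset.sum_ite_eq', Finset.mem_univ, if_true] at h1
  exact (mul_eq_zero.mp h1).resolve_right hQ0

theorem aux_col {Q k n t : ℕ} (hQ : 2 ≤ Q) (Φ : (Fin k → Fin Q) → (Fin n → Fin Q) → ℂ)
    (hkn : t = k + (n - t))
    (hu : TUniform t Φ) (A : Finset (Fin n)) (hA : A.card = t)
    (d : (Fin k → Fin Q) → ({i // i ∉ A} → Fin Q) → ℂ)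
    (h : ∀ u, ∑ s, ∑ w, Φ s (mergeOn A u w) * d s w = 0) : ∀ s w, d s w = 0 := by
  have hr := hu A hA
  have hQ0 : ((Q : ℂ) ^ t) ≠ 0 := by
    apply pow_ne_zero; exact_mod_cast (by omega : Q ≠ 0)
  let M : Matrix ({i // i ∈ A} → Fin Q) ((Fin k → Fin Q) × ({i // i ∉ A} → Fin Q)) ℂ :=
    Matrix.of fun u p => Φ p.1 (mergeOn A u p.2)
  have hM : M * (((Q : ℂ) ^ t) • M.conjTranspose) = 1 := by
    have : M * M.conjTranspose = rdm Φ A := by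
      ext u v
      simp [M, Matrix.mul_apply, rdm, Fintype.sum_prod_type]
    rw [Matrix.mul_smul, this, hr, smul_smul, mul_inv_cancel₀ hQ0, one_smul]
  have hc1 : Fintype.card {i // i ∈ A} = t := by simp [hA]
  have hc2 : Fintype.card {i // i ∉ A} = n - t := by
    rw [Fintype.card_subtype_compl]; simp [hA]
  have hcard : Fintype.card ({i // i ∈ A} → Fin Q) =
      Fintype.card ((Fin k → Fin Q) × ({i // i ∉ A} → Fin Q)) := by
    rw [Fintype.card_prod, Fintype.card_fun, Fintype.card_fun, Fintype.card_fun, hc1, hc2]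
    simp only [Fintype.card_fin]
    rw [← pow_add, ← hkn]
  have hM2 := (Matrix.mul_eq_one_comm_of_card_eq _ _ _ hcard).mp hM
  let D : (Fin k → Fin Q) × ({i // i ∉ A} → Fin Q) → ℂ := fun p => d p.1 p.2
  have hD : M.mulVec D = 0 := by
    funext u
    simpa [M, D, Matrix.mulVec, dotProduct, Fintype.sum_prod_type] using h u
  have : D = 0 := by
    rw [← Matrix.one_mulVec D, ← hM2, ← Matrix.mulVec_mulVec, hD, Matrix.mulVec_zero]
  intro s w
  exact congrFun this (s, w)

theorem aux_avg {ι : Type*} [Fintype ι] [DecidableEq ι] {Q : ℕ} (i : ι)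
    (F : (ι → Fin Q) → ℂ) :
    ∑ u, ∑ q, F (Function.update u i q) = Q * ∑ u, F u := by
  have e := Equiv.funSplitAt i (Fin Q)
  have h2 : ∀ u : ι → Fin Q, ∀ q, Function.update u i q =
      (Equiv.funSplitAt i (Fin Q)).symm (q, (Equiv.funSplitAt i (Fin Q) u).2) := by
    intro u q
    funext m
    by_cases hm : m = i
    · subst hm; simp [Equiv.funSplitAt, Equiv.piSplitAt]
    · simp [Equiv.funSplitAt, Equiv.piSplitAt, hm]
  simp_rw [h2]
  rw [Equiv.sum_comp (Equiv.funSplitAt i (Fin Q))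
    (fun p => ∑ q, F ((Equiv.funSplitAt i (Fin Q)).symm (q, p.2)))]
  rw [← Equiv.sum_comp (Equiv.funSplitAt i (Fin Q)).symm F]
  rw [Fintype.sum_prod_type, Fintype.sum_prod_type]
  simp only [Finset.sum_const, Finset.card_univ, Fintype.card_fin, nsmul_eq_mul]
  rw [Finset.sum_comm]

theorem aux_merge_update {n Q : ℕ} (A : Finset (Fin n)) (u : {i // i ∈ A} → Fin Q)
    (v : {i // i ∉ A} → Fin Q) (i : Fin n) (hi : i ∈ A) (q : Fin Q) :
    mergeOn A (Function.update u ⟨i, hi⟩ q) v = Function.update (mergeOn A u v) i q := by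
  funext m
  by_cases hm : m = i
  · subst hm; simp [mergeOn, hi]
  · by_cases h : m ∈ A <;> simp [mergeOn, h, hm, Function.update]

theorem aux_row2 {Q k n t : ℕ} (hQ : 2 ≤ Q) (Φ : (Fin k → Fin Q) → (Fin n → Fin Q) → ℂ)
    (hu : TUniform t Φ) (A : Finset (Fin n)) (hA : A.card = t)
    (i1 i2 : Fin n) (h1 : i1 ∈ A) (h2 : i2 ∈ A) (h12 : i1 ≠ i2)
    (c : Fin Q → Fin Q → ℂ)
    (h : ∀ s w, ∑ q, ∑ z, c q z * Φ s (Function.update (Function.update w i1 q) i2 z) = 0) :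
    ∀ q z, c q z = 0 := by
  have hQ0 : (Q : ℂ) ≠ 0 := by exact_mod_cast (by omega : Q ≠ 0)
  have h12' : (⟨i1, h1⟩ : {i // i ∈ A}) ≠ ⟨i2, h2⟩ := by simpa using h12
  have key := aux_row hQ Φ hu A hA (fun u => c (u ⟨i1, h1⟩) (u ⟨i2, h2⟩)) (by
    intro s w
    have e1 := aux_avg (⟨i2, h2⟩ : {i // i ∈ A})
      (fun u => c (u ⟨i1, h1⟩) (u ⟨i2, h2⟩) * Φ s (mergeOn A u w))
    have e2 := aux_avg (⟨i1, h1⟩ : {i // i ∈ A})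
      (fun u => ∑ z, (fun u => c (u ⟨i1, h1⟩) (u ⟨i2, h2⟩) * Φ s (mergeOn A u w))
        (Function.update u ⟨i2, h2⟩ z))
    rw [e1] at e2
    have e3 : (0 : ℂ) = Q * (Q * ∑ u : {i // i ∈ A} → Fin Q,
        c (u ⟨i1, h1⟩) (u ⟨i2, h2⟩) * Φ s (mergeOn A u w)) := by
      rw [← e2]
      symm
      refine Finset.sum_eq_zero fun u _ => ?_
      rw [← h s (mergeOn A u w)]
      refine Finset.sum_congr rfl fun q _ => Finset.sum_congr rfl fun z _ => ?_
      simp only [aux_merge_update, Function.update_self, Function.update_of_ne h12']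
    have e4 := e3.symm
    simpa [hQ0] using e4)
  intro q z
  have := congrFun key (Function.update (fun _ => q) ⟨i2, h2⟩ z)
  simpa [Function.update_of_ne h12'] using this

/-- Reindexing of the sum over the complement of `A`. -/
theorem aux_reindex {Q n t m : ℕ} (e : Fin t ⊕ Fin m ≃ Fin n) (j : Fin t) (L : Fin m)
    (A : Finset (Fin n)) (hl : ∀ i, e (Sum.inl i) ∈ A ↔ i ≠ j)
    (hr : ∀ i, e (Sum.inr i) ∈ A ↔ i = L) (x : Fin Q)
    (H : Fin Q → (Fin m → Fin Q) → ℂ) :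
    ∑ v : {i // i ∉ A} → Fin Q, H (v ⟨e (Sum.inl j), by simp [hl]⟩)
      (fun i => if h : i = L then x else v ⟨e (Sum.inr i), by simpa [hr] using h⟩) =
    ∑ p, ∑ r : Fin m → Fin Q, if r L = x then H p r else 0 := by
  rw [← Fintype.sum_prod_type' (f := fun p (r : Fin m → Fin Q) => if r L = x then H p r else 0)]
  rw [← Finset.sum_filter]
  refine Finset.sum_bij' (fun v _ => (v ⟨e (Sum.inl j), by simp [hl]⟩,
      (fun i => if h : i = L then x else v ⟨e (Sum.inr i), by simpa [hr] using h⟩)))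
    (fun p _ => fun i => Sum.elim (fun _ => p.1) p.2 (e.symm i.1)) ?_ ?_ ?_ ?_ ?_
  · intro v _; simp
  · intro p _; simp
  · intro v _
    funext ⟨i, hi⟩
    obtain ⟨y, rfl⟩ := e.surjective i
    rcases y with y | y
    · have : y = j := by simpa [hl] using hi
      subst this; simp
    · have : y ≠ L := by simpa [hr] using hi
      simp [this]
  · rintro ⟨p, r⟩ hp
    have hp' : r L = x := by simpa using hp
    ext1
    · simp
    · funext i
      by_cases hi : i = L
      · subst hi; simp [hp']
      · simp [hi]
  · intro v _; rfl

theorem aux_prod {Q m : ℕ} (L : Fin m) (hL : ∀ i : Fin m, (i : ℕ) < m - 1 ↔ i ≠ L)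
    (G : Fin (m - 1) → Matrix (Fin Q) (Fin Q) ℂ)
    (hG : ∀ i, G i ∈ Matrix.unitaryGroup (Fin Q) ℂ) (ε : Fin Q → ℂ)
    (y y0 : Fin m → Fin Q) :
    ∑ r : Fin m → Fin Q, (∏ i : Fin m, if h : (i : ℕ) < m - 1 then G ⟨i, h⟩ (r i) (y0 i) else 1) *
      (∏ i : Fin m, if h : (i : ℕ) < m - 1 then (starRingEnd ℂ) (G ⟨i, h⟩ (r i) (y i)) else ε (y i))
    = ∑ z, if y = Function.update y0 L z then Q * ε z else 0 := by
  simp_rw [← Finset.prod_mul_distrib]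
  have := (Finset.prod_univ_sum (fun _ : Fin m => (Finset.univ : Finset (Fin Q)))
    (fun i ρ => (if h : (i : ℕ) < m - 1 then G ⟨i, h⟩ ρ (y0 i) else 1) *
      (if h : (i : ℕ) < m - 1 then (starRingEnd ℂ) (G ⟨i, h⟩ ρ (y i)) else ε (y i))))
  rw [Fintype.piFinset_univ] at this
  rw [← this]
  have hi : ∀ i : Fin m, (∑ ρ, (if h : (i : ℕ) < m - 1 then G ⟨i, h⟩ ρ (y0 i) else 1) *
      (if h : (i : ℕ) < m - 1 then (starRingEnd ℂ) (G ⟨i, h⟩ ρ (y i)) else ε (y i)))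
      = if i = L then Q * ε (y L) else if y i = y0 i then 1 else 0 := by
    intro i
    by_cases h : (i : ℕ) < m - 1
    · have h' := (hL i).mp h
      have hu := congrFun (congrFun (Matrix.mem_unitaryGroup_iff'.mp (hG ⟨i, h⟩)) (y i)) (y0 i)
      simp only [Matrix.mul_apply, Matrix.star_apply, Matrix.one_apply] at hu
      simp only [h, h', dite_true, if_false]
      rw [← hu]
      refine Finset.sum_congr rfl fun ρ _ => ?_
      rw [mul_comm]; rfl
    · have h' : i = L := by by_contra h'; exact h ((hL i).mpr h')
      subst h'
      simp [h]
  simp_rw [hi]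
  by_cases hy : ∀ i, i ≠ L → y i = y0 i
  · have e1 : ∀ z, y = Function.update y0 L z ↔ y L = z := by
      intro z
      constructor
      · intro h; rw [h]; simp
      · intro h; funext i
        by_cases hi : i = L
        · subst hi; simp [h]
        · simp [hi, hy i hi]
    simp only [e1, Finset.sum_ite_eq, Finset.mem_univ, if_true]
    rw [Finset.prod_eq_single L]
    · simp
    · intro i _ hi; simp [hi, hy i hi]
    · simp
  · push Not at hy
    obtain ⟨i, hiL, hne⟩ := hy
    rw [Finset.prod_eq_zero (Finset.mem_univ i) (by simp [hiL, hne])]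
    symm
    refine Finset.sum_eq_zero fun z _ => ?_
    rw [if_neg]
    intro h
    apply hne; rw [h]; simp [hiL]

/-- Lemma 3.6.  With `U` a `T`-standard-form unitary of the `t`-uniform
state `Φ` (where `T ⊆ {1,…,n-1}`, qudit `n` being the last coordinate of `T^c`), arbitrary
unitaries `G_i` and a unit vector `ε`, the Schmidt rank of `ψ_out` across the bipartition
`({W_j, W_j'} | all other qudits)` equals `Q²` for every `j ∈ {1,…,t}`. -/
theorem stmt_10 (Q t n : ℕ) (hQ : 2 ≤ Q) (ht : 2 ≤ t) (htn : t < n) (hn : n ≤ 2 * t)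
    (k : ℕ) (hk : k = 2 * t - n)
    (Φ : (Fin k → Fin Q) → (Fin n → Fin Q) → ℂ)
    (hnorm : ∑ s : Fin k → Fin Q, ∑ w : Fin n → Fin Q,
      Φ s w * (starRingEnd ℂ) (Φ s w) = 1)
    (huniform : TUniform t Φ)
    (T : Finset (Fin n)) (hT : T.card = t) (hTc : Tᶜ.card = n - t)
    (hTsub : ∀ i ∈ T, (i : ℕ) < n - 1)
    (U : Matrix (Fin t → Fin Q) (Fin t → Fin Q) ℂ)
    (hUuni : U ∈ Matrix.unitaryGroup (Fin t → Fin Q) ℂ)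
    (hUstd : ∀ (s : Fin k → Fin Q) (w : Fin n → Fin Q),
      Φ s w = (Real.sqrt ((Q : ℝ) ^ t) : ℂ)⁻¹ *
        U (fun i => w (T.orderEmbOfFin hT i))
          (fun i => Fin.append s (fun j => w (Tᶜ.orderEmbOfFin hTc j))
            (Fin.cast (by omega : t = k + (n - t)) i)))
    (G : Fin (n - t - 1) → Matrix (Fin Q) (Fin Q) ℂ)
    (hG : ∀ i, G i ∈ Matrix.unitaryGroup (Fin Q) ℂ)
    (ε : Fin Q → ℂ) (hε : ∑ m : Fin Q, ε m * (starRingEnd ℂ) (ε m) = 1) :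
    ∀ j : Fin t,
      (Matrix.of fun (xy : Fin Q × Fin Q)
          (c : ({i : Fin t // i ≠ j} → Fin Q) × Fin Q × ({i : Fin t // i ≠ j} → Fin Q)) =>
        psiOutStd Q t n k (by omega) U G ε ⟨n - t - 1, by omega⟩
          (insAt j xy.1 c.1) c.2.1 (insAt j xy.2 c.2.2)).rank = Q ^ 2 := by
  have h1 : t = k + (n - t) := by omega
  have hQ0 : (Q : ℂ) ≠ 0 := by exact_mod_cast (by omega : Q ≠ 0)
  have hc0 : (Real.sqrt ((Q : ℝ) ^ t) : ℂ)⁻¹ ≠ 0 := by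
    apply inv_ne_zero
    have : (0 : ℝ) < Real.sqrt ((Q : ℝ) ^ t) := by
      apply Real.sqrt_pos.mpr; apply pow_pos; exact_mod_cast (by omega : 0 < Q)
    exact_mod_cast this.ne'
  intro j
  set L : Fin (n - t) := ⟨n - t - 1, by omega⟩ with hLdef
  have hL : ∀ i : Fin (n - t), (i : ℕ) < n - t - 1 ↔ i ≠ L := by
    intro i
    rw [Ne, Fin.ext_iff, hLdef]
    have := i.2
    simp only
    omega
  let app : (Fin k → Fin Q) → (Fin (n - t) → Fin Q) → Fin t → Fin Q :=
    fun s r i => Fin.append s r (Fin.cast h1 i)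
  obtain ⟨e, hΦ⟩ : ∃ e : Fin t ⊕ Fin (n - t) ≃ Fin n, ∀ s w,
      Φ s w = (Real.sqrt ((Q : ℝ) ^ t) : ℂ)⁻¹ *
      U (fun i => w (e (Sum.inl i))) (app s (fun m => w (e (Sum.inr m)))) := by
    refine ⟨finSumEquivOfFinset hT hTc, ?_⟩
    intro s w
    rw [hUstd s w]
    simp only [app, finSumEquivOfFinset_inl, finSumEquivOfFinset_inr]
  let A : Fin t → Finset (Fin n) := fun j =>
    (((Finset.univ.erase j).disjSum {L}).map e.toEmbedding)
  have hAl : ∀ j i, e (Sum.inl i) ∈ A j ↔ i ≠ j := by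
    intro j i; simp [A]
  have hAr : ∀ j i, e (Sum.inr i) ∈ A j ↔ i = L := by
    intro j i; simp [A]
  have hAc : ∀ j, (A j).card = t := by
    intro j; simp [A, Finset.card_disjSum]; omega
  have hrows : ∀ lam : Fin Q × Fin Q → ℂ,
      (∀ c : ({i : Fin t // i ≠ j} → Fin Q) × Fin Q × ({i : Fin t // i ≠ j} → Fin Q),
        ∑ xy, lam xy * psiOutStd Q t n k h1 U G ε L
          (insAt j xy.1 c.1) c.2.1 (insAt j xy.2 c.2.2) = 0) → ∀ xy, lam xy = 0 := by
    intro lam hlam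
    let D : ({i : Fin t // i ≠ j} → Fin Q) → Fin Q → (Fin k → Fin Q) →
        (Fin (n - t) → Fin Q) → ℂ := fun b p s r =>
      ∑ q, lam (p, q) * ∑ y, (starRingEnd ℂ) (U (insAt j q b) (app s y)) *
        ∏ i : Fin (n - t),
            if h : (i : ℕ) < n - t - 1 then (starRingEnd ℂ) ((G ⟨i, h⟩) (r i) (y i))
            else ε (y i)
    have hDL : ∀ b p s r r', (∀ i, i ≠ L → r i = r' i) → D b p s r = D b p s r' := by
      intro b p s r r' hrr
      simp only [D]
      refine Finset.sum_congr rfl fun q _ => ?_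
      congr 1
      refine Finset.sum_congr rfl fun y _ => ?_
      congr 1
      refine Finset.prod_congr rfl fun i _ => ?_
      by_cases h : (i : ℕ) < n - t - 1
      · simp only [h, dite_true]; rw [hrr i ((hL i).mp h)]
      · simp only [h, dite_false]
    -- first contraction
    have hsum : ∀ a x b, ∑ s, ∑ p, ∑ r : Fin (n - t) → Fin Q,
        (if r L = x then U (insAt j p a) (app s r) * D b p s r else 0) = 0 := by
      intro a x b
      have h := hlam (a, x, b)
      have h' : (Real.sqrt ((Q : ℝ) ^ t) : ℂ)⁻¹ * ∑ s, ∑ p, ∑ r : Fin (n - t) → Fin Q,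
        (if r L = x then U (insAt j p a) (app s r) * D b p s r else 0) = 0 := by
        refine Eq.trans ?_ h
        simp only [psiOutStd, D, app]
        rw [Fintype.sum_prod_type]
        rw [Finset.sum_comm, Finset.mul_sum]
        refine Finset.sum_congr rfl fun p _ => ?_
        have hx : ∀ q, lam (p, q) * ((Real.sqrt ((Q : ℝ) ^ t) : ℂ)⁻¹ *
            ∑ s : Fin k → Fin Q, ∑ r : Fin (n - t) → Fin Q, ∑ y : Fin (n - t) → Fin Q,
              U (insAt j p a) (fun i => Fin.append s r (Fin.cast h1 i)) *
                (if r L = x then 1 else 0) *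
                (starRingEnd ℂ) (U (insAt j q b) (fun i => Fin.append s y (Fin.cast h1 i))) *
                ∏ i : Fin (n - t),
                  if h : (i : ℕ) < n - t - 1 then (starRingEnd ℂ) ((G ⟨i, h⟩) (r i) (y i))
                  else ε (y i)) =
            (Real.sqrt ((Q : ℝ) ^ t) : ℂ)⁻¹ *
            ∑ s : Fin k → Fin Q, ∑ r : Fin (n - t) → Fin Q,
              if r L = x then U (insAt j p a) (fun i => Fin.append s r (Fin.cast h1 i)) *
              (lam (p, q) * ∑ y, (starRingEnd ℂ)
                (U (insAt j q b) (fun i => Fin.append s y (Fin.cast h1 i))) *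
                ∏ i : Fin (n - t),
                  if h : (i : ℕ) < n - t - 1 then (starRingEnd ℂ) ((G ⟨i, h⟩) (r i) (y i))
                  else ε (y i)) else 0 := by
          intro q
          rw [mul_left_comm]
          congr 1
          rw [Finset.mul_sum]
          refine Finset.sum_congr rfl fun s _ => ?_
          rw [Finset.mul_sum]
          refine Finset.sum_congr rfl fun r _ => ?_
          by_cases hrx : r L = x
          · simp only [hrx, if_true, Finset.mul_sum]
            refine Finset.sum_congr rfl fun y _ => ?_
            ring
          · simp [hrx]
        refine Eq.trans ?_ (Finset.sum_congr rfl fun q _ => hx q).symm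
        rw [← Finset.mul_sum]
        congr 1
        symm
        rw [Finset.sum_comm]
        refine Finset.sum_congr rfl fun s _ => ?_
        rw [Finset.sum_comm]
        refine Finset.sum_congr rfl fun r _ => ?_
        by_cases hrx : r L = x
        · simp only [hrx, if_true]
          rw [Finset.mul_sum]
        · simp [hrx]
      exact (mul_eq_zero.mp h').resolve_left hc0
    have hD0 : ∀ b p s r, D b p s r = 0 := by
      intro b p s r
      have x0 : Fin Q := p
      have key := aux_col hQ Φ h1 huniform (A j) (hAc j)
        (fun s v => D b (v ⟨e (Sum.inl j), by simp [hAl]⟩) s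
          (fun i => if h : i = L then x0 else
            v ⟨e (Sum.inr i), by simpa [hAr] using h⟩)) (by
          intro u
          let x : Fin Q := u ⟨e (Sum.inr L), by simp [hAr]⟩
          let a : {i : Fin t // i ≠ j} → Fin Q := fun i =>
            u ⟨e (Sum.inl i.1), by simpa [hAl] using i.2⟩
          have h3 : ∀ s, ∑ v, Φ s (mergeOn (A j) u v) *
              D b (v ⟨e (Sum.inl j), by simp [hAl]⟩) s
                (fun i => if h : i = L then x0 else
                  v ⟨e (Sum.inr i), by simpa [hAr] using h⟩) =
              (Real.sqrt ((Q : ℝ) ^ t) : ℂ)⁻¹ * ∑ p, ∑ r : Fin (n - t) → Fin Q,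
              (if r L = x then U (insAt j p a) (app s r) * D b p s r else 0) := by
            intro s
            rw [← aux_reindex e j L (A j) (hAl j) (hAr j) x
              (fun p r => U (insAt j p a) (app s r) * D b p s r), Finset.mul_sum]
            refine Finset.sum_congr rfl fun v _ => ?_
            rw [hΦ, mul_assoc]
            congr 2
            · congr 2
              · funext i
                by_cases hi : i = j
                · subst hi; simp [mergeOn, insAt, hAl]
                · simp [mergeOn, insAt, hAl, hi, a]
              · funext i
                by_cases hi : i = L
                · subst hi; simp [mergeOn, hAr, x]
                · simp [mergeOn, hAr, hi]
            · apply hDL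
              intro i hi
              simp [hi]
          rw [Finset.sum_congr rfl fun s _ => h3 s, ← Finset.mul_sum, hsum, mul_zero])
      have key2 := key s (fun i => Sum.elim (fun _ => p) r (e.symm i.1))
      rw [← key2]
      simp only [Equiv.symm_apply_apply, Sum.elim_inl, Sum.elim_inr]
      apply hDL
      intro i hi
      simp [hi]
    -- remove the unitaries `G`
    have hG0 : ∀ b p s y0, ∑ q, ∑ z, lam (p, q) * ε z *
        (starRingEnd ℂ) (U (insAt j q b) (app s (Function.update y0 L z))) = 0 := by
      intro b p s y0
      have h4 : ∑ r : Fin (n - t) → Fin Q,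
          (∏ i : Fin (n - t), if h : (i : ℕ) < n - t - 1 then G ⟨i, h⟩ (r i) (y0 i) else 1) *
            D b p s r = 0 := by
        simp [hD0]
      have h5 : ∑ r : Fin (n - t) → Fin Q,
          (∏ i : Fin (n - t), if h : (i : ℕ) < n - t - 1 then G ⟨i, h⟩ (r i) (y0 i) else 1) *
            D b p s r = Q * ∑ q, ∑ z, lam (p, q) * ε z *
        (starRingEnd ℂ) (U (insAt j q b) (app s (Function.update y0 L z))) := by
        calc _ = ∑ q, lam (p, q) * ∑ y, (starRingEnd ℂ) (U (insAt j q b) (app s y)) *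
              ∑ r : Fin (n - t) → Fin Q,
              (∏ i : Fin (n - t), if h : (i : ℕ) < n - t - 1 then
                G ⟨i, h⟩ (r i) (y0 i) else 1) *
              ∏ i : Fin (n - t), if h : (i : ℕ) < n - t - 1 then
                (starRingEnd ℂ) ((G ⟨i, h⟩) (r i) (y i)) else ε (y i) := by
              simp only [D, Finset.mul_sum]
              rw [Finset.sum_comm]
              refine Finset.sum_congr rfl fun q _ => ?_
              rw [Finset.sum_comm]
              refine Finset.sum_congr rfl fun y _ => ?_
              refine Finset.sum_congr rfl fun r _ => ?_
              ring
          _ = _ := by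
              rw [Finset.mul_sum]
              refine Finset.sum_congr rfl fun q _ => ?_
              simp_rw [aux_prod L hL G hG ε _ y0, Finset.mul_sum]
              rw [Finset.sum_comm]
              refine Finset.sum_congr rfl fun z _ => ?_
              simp only [mul_ite, mul_zero, Finset.sum_ite_eq', Finset.mem_univ, if_true]
              ring
      rw [h5] at h4
      exact (mul_eq_zero.mp h4).resolve_left hQ0
    -- final contraction
    obtain ⟨j0, hj0⟩ : ∃ j0 : Fin t, j ≠ j0 := by
      have : Nontrivial (Fin t) := Fin.nontrivial_iff_two_le.mpr ht
      obtain ⟨j0, h⟩ := exists_ne j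
      exact ⟨j0, h.symm⟩
    have hfin : ∀ p q z, (starRingEnd ℂ) (lam (p, q) * ε z) = 0 := by
      intro p
      refine aux_row2 hQ Φ huniform (A j0) (hAc j0) (e (Sum.inl j)) (e (Sum.inr L))
        ((hAl j0 j).mpr hj0) ((hAr j0 L).mpr rfl) (by simp)
        (fun q z => (starRingEnd ℂ) (lam (p, q) * ε z)) ?_
      intro s w
      have h6 := hG0 (fun i => w (e (Sum.inl i.1))) p s (fun m => w (e (Sum.inr m)))
      have h7 := congrArg (starRingEnd ℂ) h6
      have h8 := congrArg (fun c => (Real.sqrt ((Q : ℝ) ^ t) : ℂ)⁻¹ * c) h7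
      simp only [map_sum, map_zero, mul_zero] at h8
      rw [← h8, Finset.mul_sum]
      refine Finset.sum_congr rfl fun q _ => ?_
      rw [Finset.mul_sum]
      refine Finset.sum_congr rfl fun z _ => ?_
      rw [hΦ]
      have e1 : (fun i => Function.update (Function.update w (e (Sum.inl j)) q)
          (e (Sum.inr L)) z (e (Sum.inl i))) = insAt j q (fun i => w (e (Sum.inl i.1))) := by
        funext i
        by_cases hi : i = j
        · subst hi; simp [insAt, Function.update]
        · simp [insAt, Function.update, hi]
      have e2 : (fun m => Function.update (Function.update w (e (Sum.inl j)) q)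
          (e (Sum.inr L)) z (e (Sum.inr m))) =
          Function.update (fun m => w (e (Sum.inr m))) L z := by
        funext i
        by_cases hi : i = L
        · subst hi; simp
        · simp [Function.update, hi]
      rw [e1, e2]
      simp only [map_mul, Complex.conj_conj]
      ring
    obtain ⟨z, hz⟩ : ∃ z, ε z ≠ 0 := by
      by_contra hcon
      push Not at hcon
      simp [hcon] at hε
    rintro ⟨p, q⟩
    have := hfin p q z
    rw [map_eq_zero] at this
    exact (mul_eq_zero.mp this).resolve_right hz
  rw [LinearIndependent.rank_matrix]
  · simp [sq]
  · rw [Fintype.linearIndependent_iff]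
    intro g hg
    apply hrows g
    intro c
    have := congrFun hg c
    simpa [Finset.sum_apply, Matrix.row] using this
end
end

section
/- Let Φ be a t-uniform purified code state with t ≥ 2, let T ⊆ {1,…,n−1} with |T| = t (qudit n is the last coordinate of T^c), let U be a T-standard-form unitary for Φ, let G_1,…,G_{n−t−1} be any unitaries on ℂ^Q, ε ∈ ℂ^Q a unit vector, Ū the entrywise complex conjugate of U, and let ψ_out := Q^{−t/2} Σ_{s ∈ {0,…,Q−1}^k} Σ_{r ∈ {0,…,Q−1}^{n−t}} U(e_s ⊗ e_{r_1} ⊗ ⋯ ⊗ e_{r_{n−t}}) ⊗ e_{r_{n−t}} ⊗ Ū(e_s ⊗ G_1^† e_{r_1} ⊗ ⋯ ⊗ G_{n−t−1}^† e_{r_{n−t−1}} ⊗ ε), a state on 2t+1 qudits W_1,…,W_t, Ŵ, W_1',…,W_t' (identifying ℂ^{Q^k} ⊗ (ℂ^Q)^{⊗(n−t)} with (ℂ^Q)^{⊗t}). Then for every nonempty J ⊆ {1,…,t} with |J| ≤ t−1, the Schmidt rank of ψ_out across the bipartition ({W_j and W_j' for j ∈ J} | all other qudits) is at least Q² (Lemma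 C.3). -/
open scoped BigOperators

noncomputable section

open ComplexConjugate in
theorem aux_iso {R C : Type*} [Fintype R] [Fintype C] [DecidableEq R] (B : R → C → ℂ) (μ : ℝ)
    (h : ∀ r r', ∑ c, B r c * conj (B r' c) = if r = r' then (μ : ℂ) else 0) (w : R → ℂ) :
    ∑ c, ‖∑ r, w r * B r c‖ ^ 2 = μ * ∑ r, ‖w r‖ ^ 2 := by
  have key : ((∑ c, ‖∑ r, w r * B r c‖ ^ 2 : ℝ) : ℂ) = ((μ * ∑ r, ‖w r‖ ^ 2 : ℝ) : ℂ) := by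
    push_cast
    simp_rw [← Complex.mul_conj', map_sum, Finset.sum_mul_sum, map_mul]
    rw [Finset.sum_comm]
    calc _ = ∑ r, ∑ r', w r * conj (w r') * ∑ c, B r c * conj (B r' c) := by
          refine Finset.sum_congr rfl fun r _ => ?_
          rw [Finset.sum_comm]
          refine Finset.sum_congr rfl fun r' _ => ?_
          rw [Finset.mul_sum]
          refine Finset.sum_congr rfl fun c _ => ?_
          ring
      _ = _ := by
          simp_rw [h]
          simp [Finset.mul_sum, mul_comm]
  exact_mod_cast key

open ComplexConjugate in
theorem aux_bnd {R C : Type*} [Fintype R] [Fintype C] [DecidableEq R] (B : R → C → ℂ) (μ : ℝ)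
    (hμ : 0 < μ)
    (h : ∀ r r', ∑ c, B r c * conj (B r' c) = if r = r' then (μ : ℂ) else 0) (g : C → ℂ) :
    ∑ r, ‖∑ c, B r c * g c‖ ^ 2 ≤ μ * ∑ c, ‖g c‖ ^ 2 := by
  set y : R → ℂ := fun r => ∑ c, B r c * g c with hy
  have h2 := aux_iso B μ h (fun r => conj (y r))
  have h0 : 0 ≤ ∑ c, ‖(μ : ℂ) * conj (g c) - ∑ r, conj (y r) * B r c‖ ^ 2 :=
    Finset.sum_nonneg fun _ _ => by positivity
  have h1 : ∑ c, ‖(μ : ℂ) * conj (g c) - ∑ r, conj (y r) * B r c‖ ^ 2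
      = μ ^ 2 * ∑ c, ‖g c‖ ^ 2 - 2 * μ * ∑ r, ‖y r‖ ^ 2 + ∑ c, ‖∑ r, conj (y r) * B r c‖ ^ 2 := by
    have hc : ∑ c, (g c * ∑ r, conj (y r) * B r c) = ((∑ r, ‖y r‖ ^ 2 : ℝ) : ℂ) := by
      push_cast
      simp_rw [← Complex.mul_conj', Finset.mul_sum]
      rw [Finset.sum_comm]
      refine Finset.sum_congr rfl fun r _ => ?_
      rw [mul_comm, show y r = ∑ c, B r c * g c from rfl, Finset.mul_sum]
      refine Finset.sum_congr rfl fun c _ => ?_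
      ring
    have hc' : ∑ c, (g c * ∑ r, conj (y r) * B r c).re = ∑ r, ‖y r‖ ^ 2 := by
      rw [← Complex.re_sum, hc, Complex.ofReal_re]
    rw [← hc', Finset.mul_sum, Finset.mul_sum, ← Finset.sum_sub_distrib, ← Finset.sum_add_distrib]
    refine Finset.sum_congr rfl fun c _ => ?_
    generalize ∑ r, conj (y r) * B r c = z
    rw [← Complex.normSq_eq_norm_sq, ← Complex.normSq_eq_norm_sq, ← Complex.normSq_eq_norm_sq]
    simp [Complex.normSq_apply]
    ring
  rw [h1, h2] at h0
  simp only [RCLike.norm_conj] at h0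
  have : μ * (∑ r, ‖y r‖ ^ 2) ≤ μ * (μ * ∑ c, ‖g c‖ ^ 2) := by nlinarith
  exact le_of_mul_le_mul_left this hμ

open ComplexConjugate ComplexOrder in
theorem aux_rank {R C : Type*} [Fintype R] [Fintype C] [DecidableEq R] (M : Matrix R C ℂ) (c : ℝ)
    (hM : ∀ w : R → ℂ, ∑ j, ‖∑ i, w i * M i j‖ ^ 2 ≤ c * ∑ i, ‖w i‖ ^ 2)
    (h1 : ∑ i, ∑ j, ‖M i j‖ ^ 2 = 1) : 1 ≤ (M.rank : ℝ) * c := by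
  classical
  have hH := Matrix.isHermitian_mul_conjTranspose_self M
  have hr : M.rank = Fintype.card {i // hH.eigenvalues i ≠ 0} := by
    rw [← hH.rank_eq_card_non_zero_eigs, Matrix.rank_self_mul_conjTranspose]
  have htr : (∑ i, hH.eigenvalues i : ℝ) = 1 := by
    have := hH.trace_eq_sum_eigenvalues
    have h2 : (M * M.conjTranspose).trace = ((∑ i, ∑ j, ‖M i j‖ ^ 2 : ℝ) : ℂ) := by
      simp [Matrix.trace, Matrix.mul_apply, Complex.mul_conj']
    rw [h2, h1] at this
    have h3 : ((∑ i, hH.eigenvalues i : ℝ) : ℂ) = ((1 : ℝ) : ℂ) := by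
      rw [this]; simp
    exact_mod_cast h3
  have hle : ∀ i, hH.eigenvalues i ≤ c := by
    intro i
    rw [hH.eigenvalues_eq]
    set v : R → ℂ := ⇑(hH.eigenvectorBasis i) with hv
    have hn : ∑ j, ‖v j‖ ^ 2 = 1 := by
      have := hH.eigenvectorBasis.orthonormal.1 i
      rw [EuclideanSpace.norm_eq] at this
      simpa using this
    have := hM (fun j => conj (v j))
    simp only [RCLike.norm_conj, hn, mul_one] at this
    refine le_trans (le_of_eq ?_) this
    have hk : star v ⬝ᵥ (M * M.conjTranspose).mulVec v
        = ((∑ j, ‖∑ i, conj (v i) * M i j‖ ^ 2 : ℝ) : ℂ) := by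
      rw [← Matrix.mulVec_mulVec, Matrix.dotProduct_mulVec]
      push_cast
      simp_rw [← Complex.mul_conj']
      simp [dotProduct, Matrix.vecMul, Matrix.mulVec, mul_comm]
    rw [hk]
    exact Complex.ofReal_re _
  calc (1 : ℝ) = ∑ i, hH.eigenvalues i := htr.symm
    _ = ∑ i : {i // hH.eigenvalues i ≠ 0}, hH.eigenvalues i := by
        rw [← Finset.sum_filter_ne_zero]
        exact Finset.sum_subtype (p := fun i => hH.eigenvalues i ≠ 0) _ (by simp) _
    _ ≤ ∑ i : {i // hH.eigenvalues i ≠ 0}, c := Finset.sum_le_sum fun i _ => hle i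
    _ = _ := by simp [hr]

open ComplexConjugate in
theorem aux_V {α γ X P : Type*} [Fintype α] [Fintype γ] [Fintype X] [Fintype P]
    [DecidableEq α] [DecidableEq X] [DecidableEq P]
    (K : α → γ → X → P → ℂ) (Gm : P → P → ℂ) (ε : X → ℂ) (μ : ℝ)
    (h2 : ∀ a a' x x', ∑ c, ∑ p, K a c x p * conj (K a' c x' p)
      = if a = a' ∧ x = x' then (μ : ℂ) else 0)
    (hG : ∀ q q', ∑ p, Gm p q * conj (Gm p q') = if q = q' then 1 else 0)
    (hε : ∑ x, ε x * conj (ε x) = 1) (a a' : α) :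
    ∑ cp : γ × P, (∑ q, Gm cp.2 q * ∑ y, ε y * conj (K a cp.1 y q)) *
      conj (∑ q, Gm cp.2 q * ∑ y, ε y * conj (K a' cp.1 y q)) = if a = a' then (μ : ℂ) else 0 := by
  set L : α → γ → P → ℂ := fun a c q => ∑ y, ε y * conj (K a c y q) with hL
  rw [Fintype.sum_prod_type]
  have e1 : ∀ c, ∑ p, (∑ q, Gm p q * L a c q) * conj (∑ q, Gm p q * L a' c q)
      = ∑ q, L a c q * conj (L a' c q) := by
    intro c
    simp_rw [map_sum, Finset.sum_mul_sum, map_mul]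
    rw [Finset.sum_comm]
    refine Finset.sum_congr rfl fun q _ => ?_
    rw [Finset.sum_comm]
    calc _ = ∑ q', L a c q * conj (L a' c q') * ∑ p, Gm p q * conj (Gm p q') := by
          refine Finset.sum_congr rfl fun q' _ => ?_
          rw [Finset.mul_sum]
          refine Finset.sum_congr rfl fun p _ => ?_
          ring
      _ = _ := by simp [hG]
  change ∑ c, ∑ p, (∑ q, Gm p q * L a c q) * conj (∑ q, Gm p q * L a' c q) = _
  simp_rw [e1]
  calc ∑ c, ∑ q, L a c q * conj (L a' c q)
      = ∑ c, ∑ q, ∑ y, ∑ y', ε y * conj (ε y') * (K a' c y' q * conj (K a c y q)) := by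
        refine Finset.sum_congr rfl fun c _ => Finset.sum_congr rfl fun q _ => ?_
        simp only [hL, map_sum, Finset.sum_mul_sum, map_mul, Complex.conj_conj]
        refine Finset.sum_congr rfl fun y _ => Finset.sum_congr rfl fun y' _ => ?_
        ring
    _ = ∑ y, ∑ y', ε y * conj (ε y') * ∑ c, ∑ q, K a' c y' q * conj (K a c y q) := by
        simp_rw [Finset.mul_sum]
        rw [← Fintype.sum_prod_type' (f := fun c q => ∑ y, ∑ y', ε y * conj (ε y') * (K a' c y' q * conj (K a c y q)))]
        rw [Finset.sum_comm]
        refine Finset.sum_congr rfl fun y _ => ?_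
        rw [Finset.sum_comm]
        refine Finset.sum_congr rfl fun y' _ => ?_
        rw [Fintype.sum_prod_type]
    _ = _ := by
        simp_rw [h2]
        by_cases haa : a = a'
        · subst haa
          simp only [true_and, if_true, mul_ite, mul_zero, Finset.sum_ite_eq', Finset.mem_univ, ← Finset.sum_mul, hε, one_mul]
        · simp [haa, Ne.symm haa]

open ComplexConjugate in
theorem aux_main {α γ X P : Type*} [Fintype α] [Fintype γ] [Fintype X] [Fintype P]
    [DecidableEq α] [DecidableEq γ] [DecidableEq X] [DecidableEq P]
    (K : α → γ → X → P → ℂ) (V : α → γ → P → ℂ) (κ : ℝ) (lam μ c : ℝ) (hlam : 0 < lam)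
    (h1 : ∀ c c' x x', ∑ a, ∑ p, K a c x p * conj (K a c' x' p)
      = if c = c' ∧ x = x' then (lam : ℂ) else 0)
    (h2 : ∀ a a', ∑ cp : γ × P, V a cp.1 cp.2 * conj (V a' cp.1 cp.2)
      = if a = a' then (μ : ℂ) else 0)
    (h3 : ∀ p p', ∑ x, ∑ a, ∑ c, K a c x p * conj (K a c x p')
      = if p = p' then ((Fintype.card X : ℝ) : ℂ) else 0)
    (hc : κ ^ 2 * lam * μ ≤ c)
    (hn : κ ^ 2 * Fintype.card X * μ * Fintype.card α = 1)
    (M : Matrix (α × α) (γ × X × γ) ℂ)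
    (hM : ∀ u v, M u v = (κ : ℂ) * ∑ p, K u.1 v.1 v.2.1 p * V u.2 v.2.2 p) :
    1 ≤ (M.rank : ℝ) * c := by
  apply aux_rank
  · intro w
    refine le_trans ?_ (mul_le_mul_of_nonneg_right hc (Finset.sum_nonneg fun _ _ => by positivity))
    have hA := fun g => aux_bnd (R := γ × X) (C := α × P) (fun r s => K s.1 r.1 r.2 s.2) lam hlam
      (by
        intro r r'
        rw [Fintype.sum_prod_type, h1]
        simp [Prod.ext_iff]) g
    have hB := fun w => aux_iso (fun a (cp : γ × P) => V a cp.1 cp.2) μ h2 w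
    calc ∑ j : γ × X × γ, ‖∑ i : α × α, w i * M i j‖ ^ 2
        = κ ^ 2 * ∑ d : γ, ∑ r : γ × X, ‖∑ s : α × P, K s.1 r.1 r.2 s.2 *
            ∑ b, w (s.1, b) * V b d s.2‖ ^ 2 := by
          have e : ∀ j : γ × X × γ, ‖∑ i : α × α, w i * M i j‖ ^ 2
            = κ ^ 2 * ‖∑ s : α × P, K s.1 j.1 j.2.1 s.2 * ∑ b, w (s.1, b) * V b j.2.2 s.2‖ ^ 2 := by
            intro j
            have : ∑ i : α × α, w i * M i j = (κ : ℂ) * ∑ s : α × P, K s.1 j.1 j.2.1 s.2 * ∑ b, w (s.1, b) * V b j.2.2 s.2 := by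
              rw [Fintype.sum_prod_type, Fintype.sum_prod_type, Finset.mul_sum]
              refine Finset.sum_congr rfl fun a _ => ?_
              simp_rw [hM, Finset.mul_sum]
              rw [Finset.sum_comm]
              refine Finset.sum_congr rfl fun p _ => Finset.sum_congr rfl fun b _ => ?_
              ring
            rw [this, norm_mul, mul_pow]
            simp
          simp_rw [e, ← Finset.mul_sum]
          congr 1
          simp_rw [Fintype.sum_prod_type]
          rw [Finset.sum_comm' (t' := Finset.univ) (s' := fun _ => Finset.univ) (by simp)]
          conv_rhs => rw [Finset.sum_comm]
          conv_lhs => rw [Finset.sum_comm]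
          refine Finset.sum_congr rfl fun a _ => ?_
          rw [Finset.sum_comm]
      _ ≤ κ ^ 2 * ∑ d : γ, lam * ∑ s : α × P, ‖∑ b, w (s.1, b) * V b d s.2‖ ^ 2 := by
          refine mul_le_mul_of_nonneg_left (Finset.sum_le_sum fun d _ => hA _) (by positivity)
      _ = κ ^ 2 * lam * ∑ a, ∑ cp : γ × P, ‖∑ b, w (a, b) * V b cp.1 cp.2‖ ^ 2 := by
          rw [← Finset.mul_sum, mul_assoc]
          congr 2
          simp_rw [Fintype.sum_prod_type]
          rw [Finset.sum_comm]
      _ = _ := by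
          simp_rw [hB, ← Finset.mul_sum, Fintype.sum_prod_type]
          ring
  · have hA := fun g => aux_iso (R := P) (C := X × α × γ) (fun p s => K s.2.1 s.2.2 s.1 p)
      (Fintype.card X : ℝ) (by
        intro r r'
        rw [Fintype.sum_prod_type]
        simp_rw [Fintype.sum_prod_type]
        rw [h3]) g
    have hV : ∀ b, ∑ cp : γ × P, ‖V b cp.1 cp.2‖ ^ 2 = μ := by
      intro b
      have := h2 b b
      simp only [Complex.mul_conj', if_true] at this
      exact_mod_cast this
    calc ∑ i : α × α, ∑ j : γ × X × γ, ‖M i j‖ ^ 2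
        = ∑ b : α, ∑ d : γ, ∑ s : X × α × γ, κ ^ 2 * ‖∑ p, V b d p * K s.2.1 s.2.2 s.1 p‖ ^ 2 := by
          have e : ∀ i j, ‖M i j‖ ^ 2 = κ ^ 2 * ‖∑ p, V i.2 j.2.2 p * K i.1 j.1 j.2.1 p‖ ^ 2 := by
            intro i j
            rw [hM, norm_mul, mul_pow]
            simp [mul_comm]
          simp_rw [e, Fintype.sum_prod_type]
          rw [Finset.sum_comm]
          refine Finset.sum_congr rfl fun b _ => ?_
          have : ∀ F : α → γ → X → γ → ℝ, ∑ a, ∑ c, ∑ x, ∑ d, F a c x d = ∑ d, ∑ x, ∑ a, ∑ c, F a c x d := by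
            intro F
            calc _ = ∑ a, ∑ d, ∑ x, ∑ c, F a c x d := by
                  refine Finset.sum_congr rfl fun a _ => ?_
                  have h : ∀ c, ∑ x, ∑ d, F a c x d = ∑ d, ∑ x, F a c x d :=
                    fun c => Finset.sum_comm
                  simp_rw [h]
                  rw [Finset.sum_comm]
                  refine Finset.sum_congr rfl fun d _ => ?_
                  rw [Finset.sum_comm]
              _ = _ := by
                  rw [Finset.sum_comm]
                  refine Finset.sum_congr rfl fun a _ => ?_
                  rw [Finset.sum_comm]
          exact this _
      _ = ∑ b : α, κ ^ 2 * Fintype.card X * ∑ cp : γ × P, ‖V b cp.1 cp.2‖ ^ 2 := by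
          refine Finset.sum_congr rfl fun b _ => ?_
          simp_rw [← Finset.mul_sum]
          rw [Fintype.sum_prod_type]
          simp_rw [hA, ← Finset.mul_sum]
          ring
      _ = 1 := by
          simp_rw [hV]
          simp
          rw [← hn]; ring

theorem sum_mergeOn {n Q : ℕ} (A : Finset (Fin n)) (f : (Fin n → Fin Q) → ℂ) :
    ∑ w, f w = ∑ u : {i // i ∈ A} → Fin Q, ∑ c : {i // i ∉ A} → Fin Q, f (mergeOn A u c) := by
  rw [← Fintype.sum_prod_type' (f := fun u c => f (mergeOn A u c))]
  exact (Equiv.sum_comp (Equiv.piEquivPiSubtypeProd (fun i => i ∈ A) (fun _ => Fin Q)).symm f).symm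

theorem piecewise_mergeOn {n Q : ℕ} (A : Finset (Fin n)) (u : Fin n → Fin Q)
    (a : {i // i ∈ A} → Fin Q) (c : {i // i ∉ A} → Fin Q) :
    A.piecewise u (mergeOn A a c) = mergeOn A (fun i => u i) c := by
  ext i
  by_cases h : i ∈ A <;> simp [mergeOn, h]

theorem piecewise_compl_mergeOn {n Q : ℕ} (A : Finset (Fin n)) (u : Fin n → Fin Q)
    (a : {i // i ∈ A} → Fin Q) (c : {i // i ∉ A} → Fin Q) :
    Aᶜ.piecewise u (mergeOn A a c) = mergeOn A a (fun i => u i) := by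
  ext i
  by_cases h : i ∈ A <;> simp [mergeOn, h]

theorem sum_pw {n Q : ℕ} (A : Finset (Fin n)) (u v : Fin n → Fin Q)
    (f : (Fin n → Fin Q) → (Fin n → Fin Q) → ℂ) :
    ∑ w, f (A.piecewise u w) (A.piecewise v w) = (Q : ℂ) ^ A.card *
      ∑ c, f (mergeOn A (fun i => u i) c) (mergeOn A (fun i => v i) c) := by
  rw [sum_mergeOn A]
  simp [piecewise_mergeOn]

theorem sum_pw_compl {n Q : ℕ} (A : Finset (Fin n)) (u v : Fin n → Fin Q)
    (f : (Fin n → Fin Q) → (Fin n → Fin Q) → ℂ) :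
    ∑ w, f (Aᶜ.piecewise u w) (Aᶜ.piecewise v w) = (Q : ℂ) ^ (n - A.card) *
      ∑ a, f (mergeOn A a (fun i => u i)) (mergeOn A a (fun i => v i)) := by
  rw [sum_mergeOn A, Finset.sum_comm]
  simp [piecewise_compl_mergeOn]

theorem sum_sum_pw {n Q : ℕ} (A : Finset (Fin n)) (f : (Fin n → Fin Q) → ℂ) :
    ∑ z : Fin n → Fin Q, ∑ w, f (A.piecewise z w) = (Q : ℂ) ^ n * ∑ w, f w := by
  have h : Function.Involutive (fun p : (Fin n → Fin Q) × (Fin n → Fin Q) =>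
      (A.piecewise p.1 p.2, A.piecewise p.2 p.1)) := by
    rintro ⟨a, b⟩
    ext i <;> by_cases h : i ∈ A <;> simp [h]
  have := Equiv.sum_comp h.toPerm (fun p : (Fin n → Fin Q) × (Fin n → Fin Q) => f p.1)
  simp only [Function.Involutive.coe_toPerm] at this
  rw [Fintype.sum_prod_type, Fintype.sum_prod_type] at this
  rw [this, Finset.mul_sum]
  simp

open ComplexConjugate in
theorem unif_full {Q k n t : ℕ} (hQ : 0 < Q) (Φ : (Fin k → Fin Q) → (Fin n → Fin Q) → ℂ)
    (h : TUniform t Φ) (A : Finset (Fin n)) (hA : A.card = t) (u v : Fin n → Fin Q) :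
    ∑ s, ∑ w, Φ s (A.piecewise u w) * conj (Φ s (A.piecewise v w))
      = if ∀ i ∈ A, u i = v i then 1 else 0 := by
  have h1 := congrFun (congrFun (h A hA) (fun i => u i)) (fun i => v i)
  simp only [rdm, Matrix.of_apply, Matrix.smul_apply, Matrix.one_apply, smul_eq_mul] at h1
  have h2 : ∀ s, ∑ w, Φ s (A.piecewise u w) * conj (Φ s (A.piecewise v w)) = _ := fun s =>
    sum_pw A u v (fun a b => Φ s a * conj (Φ s b))
  simp_rw [h2, ← Finset.mul_sum]
  rw [h1, hA]
  have hQ' : (Q : ℂ) ^ t ≠ 0 := by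
    have : (Q : ℂ) ≠ 0 := by exact_mod_cast hQ.ne'
    positivity
  have h3 : ((fun i : {i // i ∈ A} => u i) = fun i : {i // i ∈ A} => v i) ↔ ∀ i ∈ A, u i = v i := by
    simp [funext_iff]
  rw [mul_inv_cancel_left₀ hQ']
  simp only [h3]

open ComplexConjugate in
theorem unif_le {Q k n t : ℕ} (hQ : 0 < Q) (htn : t ≤ n)
    (Φ : (Fin k → Fin Q) → (Fin n → Fin Q) → ℂ)
    (h : TUniform t Φ) (A : Finset (Fin n)) (hA : A.card ≤ t) (u v : Fin n → Fin Q) :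
    ∑ s, ∑ w, Φ s (A.piecewise u w) * conj (Φ s (A.piecewise v w))
      = if ∀ i ∈ A, u i = v i then 1 else 0 := by
  obtain ⟨B, hAB, hB⟩ := Finset.exists_superset_card_eq hA (by simpa using htn)
  have hQ' : (Q : ℂ) ^ n ≠ 0 := by
    have : (Q : ℂ) ≠ 0 := by exact_mod_cast hQ.ne'
    positivity
  apply mul_left_cancel₀ hQ'
  have hp : ∀ u z w : Fin n → Fin Q,
      B.piecewise (A.piecewise u z) w = A.piecewise u (B.piecewise z w) := by
    intro u z w
    ext i
    by_cases h1 : i ∈ A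
    · simp [h1, hAB h1]
    · by_cases h2 : i ∈ B <;> simp [h1, h2]
  have h1 := fun z => unif_full hQ Φ h B hB (A.piecewise u z) (A.piecewise v z)
  simp_rw [hp] at h1
  have h2 : ∀ s, ∑ z, ∑ w, Φ s (A.piecewise u (B.piecewise z w)) *
      conj (Φ s (A.piecewise v (B.piecewise z w))) = _ := fun s =>
    sum_sum_pw B (fun w => Φ s (A.piecewise u w) * conj (Φ s (A.piecewise v w)))
  rw [Finset.mul_sum]
  simp_rw [← h2]
  rw [Finset.sum_comm]
  simp_rw [h1]
  have h3 : ∀ z : Fin n → Fin Q, (∀ i ∈ B, A.piecewise u z i = A.piecewise v z i) ↔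
      ∀ i ∈ A, u i = v i := by
    intro z
    constructor
    · intro h i hi
      simpa [hi] using h i (hAB hi)
    · intro h i hi
      by_cases hi' : i ∈ A
      · simpa [hi'] using h i hi'
      · simp [hi']
  simp only [h3]
  simp

open ComplexConjugate in
theorem unif_U {Q t n k : ℕ} (hQ : 0 < Q) (htn : t < n) (h1 : t = k + (n - t))
    (Φ : (Fin k → Fin Q) → (Fin n → Fin Q) → ℂ) (huniform : TUniform t Φ)
    (T : Finset (Fin n)) (hT : T.card = t) (hTc : Tᶜ.card = n - t)
    (U : (Fin t → Fin Q) → (Fin t → Fin Q) → ℂ)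
    (hUstd : ∀ (s : Fin k → Fin Q) (w : Fin n → Fin Q),
      Φ s w = (Real.sqrt ((Q : ℝ) ^ t) : ℂ)⁻¹ *
        U (fun i => w (T.orderEmbOfFin hT i))
          (fun i => Fin.append s (fun j => w (Tᶜ.orderEmbOfFin hTc j)) (Fin.cast h1 i)))
    (lst : Fin (n - t)) (S : Finset (Fin t)) (hS : S.card + 1 ≤ t) (u v : Fin t → Fin Q)
    (x y : Fin Q) :
    ∑ s : Fin k → Fin Q, ∑ r : Fin (n - t) → Fin Q, ∑ a : Fin t → Fin Q,
      U (S.piecewise u a) (fun i => Fin.append s (Function.update r lst x) (Fin.cast h1 i)) *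
      conj (U (S.piecewise v a) (fun i => Fin.append s (Function.update r lst y) (Fin.cast h1 i)))
      = if (∀ i ∈ S, u i = v i) ∧ x = y then (Q : ℂ) ^ t else 0 := by
  classical
  set σ := finSumEquivOfFinset hT hTc with hσ
  have hl : ∀ i, T.orderEmbOfFin hT i = σ (Sum.inl i) := fun i => by simp [hσ]
  have hr : ∀ i, Tᶜ.orderEmbOfFin hTc i = σ (Sum.inr i) := fun i => by simp [hσ]
  let W : (Fin t → Fin Q) → (Fin (n - t) → Fin Q) → Fin n → Fin Q :=
    fun a r i => Sum.elim a r (σ.symm i)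
  let A : Finset (Fin n) := (insert (Sum.inr lst) (S.image Sum.inl)).map σ.toEmbedding
  have hA : A.card ≤ t := by
    rw [Finset.card_map]
    refine (Finset.card_insert_le _ _).trans ?_
    have := Finset.card_image_le (s := S) (f := (Sum.inl : Fin t → Fin t ⊕ Fin (n - t)))
    omega
  have hAl : ∀ i, σ (Sum.inl i) ∈ A ↔ i ∈ S := by simp [A]
  have hAr : ∀ i, σ (Sum.inr i) ∈ A ↔ i = lst := by simp [A]
  have key := unif_le hQ htn.le Φ huniform A hA (W u fun _ => x) (W v fun _ => y)
  have hcond : (∀ i ∈ A, W u (fun _ => x) i = W v (fun _ => y) i) ↔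
      ((∀ i ∈ S, u i = v i) ∧ x = y) := by
    constructor
    · intro h
      exact ⟨fun i hi => by simpa [W] using h _ ((hAl i).2 hi),
        by simpa [W] using h _ ((hAr lst).2 rfl)⟩
    · rintro ⟨h, h'⟩ i hi
      obtain ⟨j, rfl⟩ := σ.surjective i
      rcases j with j | j
      · simpa [W] using h j ((hAl j).1 hi)
      · simpa [W] using h'
  simp only [hcond] at key
  have hsum : ∀ f : (Fin n → Fin Q) → ℂ, ∑ w, f w = ∑ r, ∑ a, f (W a r) := by
    intro f
    rw [Finset.sum_comm, ← Fintype.sum_prod_type' (f := fun a r => f (W a r))]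
    exact (Equiv.sum_comp ((Equiv.sumArrowEquivProdArrow _ _ _).symm.trans
      (Equiv.arrowCongr σ (Equiv.refl (Fin Q)))) f).symm
  simp_rw [hl, hr] at hUstd
  simp_rw [hsum, hUstd] at key
  have e1 : ∀ u a r x, (fun i => A.piecewise (W u fun _ => x) (W a r) (σ (Sum.inl i))) =
      S.piecewise u a := by
    intro u a r x
    ext i
    by_cases h : i ∈ S
    · simp [h, Finset.piecewise_eq_of_mem _ _ _ ((hAl i).2 h), W]
    · simp [h, Finset.piecewise_eq_of_notMem _ _ _ (fun h' => h ((hAl i).1 h')), W]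
  have e2 : ∀ u a r x, (fun i => A.piecewise (W u fun _ => x) (W a r) (σ (Sum.inr i))) =
      Function.update r lst x := by
    intro u a r x
    ext i
    by_cases h : i = lst
    · rw [Finset.piecewise_eq_of_mem _ _ _ ((hAr i).2 h)]
      simp [h, W]
    · rw [Finset.piecewise_eq_of_notMem _ _ _ (fun h' => h ((hAr i).1 h'))]
      simp [h, W]
  simp_rw [e1, e2] at key
  have hk : ((Real.sqrt ((Q : ℝ) ^ t) : ℂ)⁻¹) * conj ((Real.sqrt ((Q : ℝ) ^ t) : ℂ)⁻¹)
      = ((Q : ℂ) ^ t)⁻¹ := by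
    rw [map_inv₀, Complex.conj_ofReal, ← mul_inv, ← Complex.ofReal_mul,
      Real.mul_self_sqrt (by positivity)]
    simp
  have hQ' : (Q : ℂ) ^ t ≠ 0 := by
    have : (Q : ℂ) ≠ 0 := by exact_mod_cast hQ.ne'
    positivity
  have h4 : ∀ α β : ℂ, ((Real.sqrt ((Q : ℝ) ^ t) : ℂ)⁻¹ * α) *
      conj ((Real.sqrt ((Q : ℝ) ^ t) : ℂ)⁻¹ * β) = ((Q : ℂ) ^ t)⁻¹ * (α * conj β) := by
    intro α β
    rw [← hk, map_mul]; ring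
  simp_rw [h4, ← Finset.mul_sum] at key
  rw [inv_mul_eq_iff_eq_mul₀ hQ'] at key
  rw [key]
  split_ifs <;> simp

/-- Column index built from the value `x` at `lst` and the remaining data. -/
def colIdx {Q t n k : ℕ} (h1 : t = k + (n - t)) (lst : Fin (n - t)) (x : Fin Q)
    (p : (Fin k → Fin Q) × ({j // j ≠ lst} → Fin Q)) : Fin t → Fin Q :=
  fun i => Fin.append p.1 ((Equiv.funSplitAt lst (Fin Q)).symm (x, p.2)) (Fin.cast h1 i)

theorem colIdx_inj {Q t n k : ℕ} (h1 : t = k + (n - t)) (lst : Fin (n - t)) (x : Fin Q)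
    (p q : (Fin k → Fin Q) × ({j // j ≠ lst} → Fin Q)) :
    colIdx h1 lst x p = colIdx h1 lst x q ↔ p = q := by
  refine ⟨fun h => ?_, fun h => by rw [h]⟩
  have h' : ∀ i, Fin.append p.1 ((Equiv.funSplitAt lst (Fin Q)).symm (x, p.2)) i =
      Fin.append q.1 ((Equiv.funSplitAt lst (Fin Q)).symm (x, q.2)) i := by
    intro i
    have := congrFun h (Fin.cast h1.symm i)
    simpa [colIdx] using this
  have ha : p.1 = q.1 := by
    ext i
    have := h' (Fin.castAdd _ i)
    simp only [Fin.append_left] at this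
    rw [this]
  have hb : (Equiv.funSplitAt lst (Fin Q)).symm (x, p.2) =
      (Equiv.funSplitAt lst (Fin Q)).symm (x, q.2) := by
    funext i
    have := h' (Fin.natAdd _ i)
    simpa only [Fin.append_right] using this
  have := (Equiv.funSplitAt lst (Fin Q)).symm.injective hb
  exact Prod.ext ha (Prod.ext_iff.1 this).2

theorem sum_split {Q m : ℕ} (lst : Fin m) (f : (Fin m → Fin Q) → ℂ) :
    ∑ r, f r = ∑ x, ∑ r' : {j // j ≠ lst} → Fin Q,
      f ((Equiv.funSplitAt lst (Fin Q)).symm (x, r')) := by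
  rw [← Fintype.sum_prod_type' (f := fun x r' => f ((Equiv.funSplitAt lst (Fin Q)).symm (x, r')))]
  exact (Equiv.sum_comp (Equiv.funSplitAt lst (Fin Q)).symm f).symm

theorem sum_update {Q m : ℕ} (lst : Fin m) (x y : Fin Q)
    (f : (Fin m → Fin Q) → (Fin m → Fin Q) → ℂ) :
    ∑ r, f (Function.update r lst x) (Function.update r lst y) =
      Q * ∑ r' : {j // j ≠ lst} → Fin Q,
      f ((Equiv.funSplitAt lst (Fin Q)).symm (x, r')) ((Equiv.funSplitAt lst (Fin Q)).symm (y, r')) := by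
  rw [sum_split lst]
  have : ∀ z x r', Function.update ((Equiv.funSplitAt lst (Fin Q)).symm (z, r')) lst x =
      (Equiv.funSplitAt lst (Fin Q)).symm (x, r') := by
    intro z x r'
    funext i
    by_cases h : i = lst
    · subst h; simp
    · simp [h]
  simp_rw [this]
  simp

open ComplexConjugate in
theorem unif_col {Q t n k : ℕ} (hQ : 0 < Q) (htn : t < n) (h1 : t = k + (n - t))
    (Φ : (Fin k → Fin Q) → (Fin n → Fin Q) → ℂ) (huniform : TUniform t Φ)
    (T : Finset (Fin n)) (hT : T.card = t) (hTc : Tᶜ.card = n - t)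
    (U : (Fin t → Fin Q) → (Fin t → Fin Q) → ℂ)
    (hUstd : ∀ (s : Fin k → Fin Q) (w : Fin n → Fin Q),
      Φ s w = (Real.sqrt ((Q : ℝ) ^ t) : ℂ)⁻¹ *
        U (fun i => w (T.orderEmbOfFin hT i))
          (fun i => Fin.append s (fun j => w (Tᶜ.orderEmbOfFin hTc j)) (Fin.cast h1 i)))
    (lst : Fin (n - t)) (S : Finset (Fin t)) (hS : S.card + 1 ≤ t) (u v : Fin t → Fin Q)
    (x y : Fin Q) :
    (Q : ℂ) * ∑ a : Fin t → Fin Q, ∑ p : (Fin k → Fin Q) × ({j // j ≠ lst} → Fin Q),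
      U (S.piecewise u a) (colIdx h1 lst x p) * conj (U (S.piecewise v a) (colIdx h1 lst y p))
      = if (∀ i ∈ S, u i = v i) ∧ x = y then (Q : ℂ) ^ t else 0 := by
  rw [← unif_U hQ htn h1 Φ huniform T hT hTc U hUstd lst S hS u v x y]
  rw [Finset.sum_comm, Fintype.sum_prod_type, Finset.mul_sum]
  refine Finset.sum_congr rfl fun s _ => ?_
  exact (sum_update lst x y (fun r r' => ∑ a : Fin t → Fin Q,
      U (S.piecewise u a) (fun i => Fin.append s r (Fin.cast h1 i)) *
      conj (U (S.piecewise v a) (fun i => Fin.append s r' (Fin.cast h1 i))))).symm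

open ComplexConjugate in
theorem Gm_unitary {Q m : ℕ} {S ι : Type*} [Fintype S] [DecidableEq S] [Fintype ι] [DecidableEq ι]
    (G : Fin m → Matrix (Fin Q) (Fin Q) ℂ)
    (hG : ∀ i, G i ∈ Matrix.unitaryGroup (Fin Q) ℂ) (f : ι → Fin m)
    (q q' : S × (ι → Fin Q)) :
    ∑ p : S × (ι → Fin Q),
      ((if p.1 = q.1 then 1 else 0) * ∏ i, conj (G (f i) (p.2 i) (q.2 i))) *
      conj ((if p.1 = q'.1 then 1 else 0) * ∏ i, conj (G (f i) (p.2 i) (q'.2 i)))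
      = if q = q' then (1 : ℂ) else 0 := by
  have h0 : ∀ i (x y : Fin Q), ∑ z, conj (G i z x) * G i z y = if x = y then (1 : ℂ) else 0 := by
    intro i x y
    have := congrFun (congrFun (Matrix.mem_unitaryGroup_iff'.1 (hG i)) x) y
    simpa [Matrix.mul_apply, Matrix.star_apply, Matrix.one_apply] using this
  have h1 : ∑ r : ι → Fin Q, ∏ i, (conj (G (f i) (r i) (q.2 i)) * G (f i) (r i) (q'.2 i))
      = if q.2 = q'.2 then (1 : ℂ) else 0 := by
    rw [← Fintype.prod_sum (fun i z => conj (G (f i) z (q.2 i)) * G (f i) z (q'.2 i))]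
    simp_rw [h0]
    by_cases h : q.2 = q'.2
    · simp [h]
    · rw [if_neg h]
      obtain ⟨i, hi⟩ := Function.ne_iff.1 h
      exact Finset.prod_eq_zero (Finset.mem_univ i) (by simp [hi])
  rw [Fintype.sum_prod_type]
  have h2 : ∀ s, ∑ r : ι → Fin Q,
      ((if s = q.1 then 1 else 0) * ∏ i, conj (G (f i) (r i) (q.2 i))) *
      conj ((if s = q'.1 then 1 else 0) * ∏ i, conj (G (f i) (r i) (q'.2 i)))
      = (if s = q.1 then 1 else 0) * (if s = q'.1 then 1 else 0) *
        if q.2 = q'.2 then (1 : ℂ) else 0 := by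
    intro s
    rw [← h1, Finset.mul_sum]
    refine Finset.sum_congr rfl fun r _ => ?_
    rw [Finset.prod_mul_distrib, map_mul, map_prod]
    simp only [Complex.conj_conj, apply_ite conj, map_one, map_zero]
    ring
  simp_rw [h2]
  rw [← Finset.sum_mul]
  simp only [ite_mul, one_mul, zero_mul, Finset.sum_ite_eq', Finset.mem_univ, if_true]
  by_cases ha : q.1 = q'.1 <;> by_cases hb : q.2 = q'.2 <;> simp [Prod.ext_iff, ha, hb]

open ComplexConjugate in
theorem psi_eq {Q t n k : ℕ} (h1 : t = k + (n - t))
    (U : Matrix (Fin t → Fin Q) (Fin t → Fin Q) ℂ)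
    (G : Fin (n - t - 1) → Matrix (Fin Q) (Fin Q) ℂ)
    (ε : Fin Q → ℂ) (lst : Fin (n - t)) (hlst : (lst : ℕ) = n - t - 1)
    (f : {j // j ≠ lst} → Fin (n - t - 1)) (hf : ∀ j, (f j : ℕ) = j.1)
    (a b : Fin t → Fin Q) (x : Fin Q) :
    psiOutStd Q t n k h1 U G ε lst a x b = (((Real.sqrt ((Q : ℝ) ^ t))⁻¹ : ℝ) : ℂ) *
      ∑ p : (Fin k → Fin Q) × ({j // j ≠ lst} → Fin Q), U a (colIdx h1 lst x p) *
        ∑ q : (Fin k → Fin Q) × ({j // j ≠ lst} → Fin Q),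
          ((if p.1 = q.1 then 1 else 0) * ∏ i, conj (G (f i) (p.2 i) (q.2 i))) *
          ∑ y, ε y * conj (U b (colIdx h1 lst y q)) := by
  unfold psiOutStd
  rw [Complex.ofReal_inv]
  congr 1
  rw [Fintype.sum_prod_type]
  refine Finset.sum_congr rfl fun s _ => ?_
  rw [sum_split lst]
  have hl : ∀ z r', (Equiv.funSplitAt lst (Fin Q)).symm (z, r') lst = z := by
    intro z r'; simp
  simp_rw [hl]
  rw [Finset.sum_eq_single x]
  rotate_left
  · intro z _ hz
    simp [hz]
  · simp
  refine Finset.sum_congr rfl fun r _ => ?_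
  rw [Fintype.sum_prod_type, Finset.sum_eq_single s]
  rotate_left
  · intro z _ hz
    simp [Ne.symm hz]
  · simp
  rw [sum_split lst, Finset.sum_comm, Finset.mul_sum]
  refine Finset.sum_congr rfl fun y _ => ?_
  rw [Finset.mul_sum, Finset.mul_sum]
  refine Finset.sum_congr rfl fun z _ => ?_
  have hp : (∏ i : Fin (n - t), if h : (i : ℕ) < n - t - 1 then
        conj ((G ⟨i, h⟩) ((Equiv.funSplitAt lst (Fin Q)).symm (x, r) i)
          ((Equiv.funSplitAt lst (Fin Q)).symm (z, y) i))
        else ε ((Equiv.funSplitAt lst (Fin Q)).symm (z, y) i))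
      = ε z * ∏ i, conj (G (f i) (r i) (y i)) := by
    rw [Fintype.prod_eq_mul_prod_subtype_ne _ lst]
    congr 1
    · rw [dif_neg (by omega), hl]
    · refine Finset.prod_congr rfl fun i _ => ?_
      have hi : (i.1 : ℕ) < n - t - 1 := by rw [← hf]; exact (f i).2
      have hfi : f i = ⟨i.1, hi⟩ := Fin.ext (hf i)
      rw [dif_pos hi, hfi]
      have e : ∀ (z : Fin Q) (r : {j // j ≠ lst} → Fin Q),
          (Equiv.funSplitAt lst (Fin Q)).symm (z, r) i.1 = r i := by
        intro z r
        simp [i.2]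
      rw [e, e]
  rw [hp]
  simp only [if_true, mul_one, one_mul]
  unfold colIdx
  ring



/-- Lemma C.3.  With `U` a `T`-standard-form unitary of the `t`-uniform
state `Φ` (where `T ⊆ {1,…,n-1}`, qudit `n` being the last coordinate of `T^c`), arbitrary
unitaries `G_i` and a unit vector `ε`, the Schmidt rank of `ψ_out` across the bipartition
`({W_j, W_j' : j ∈ J} | all other qudits)` is at least `Q²` for every nonempty
`J ⊆ {1,…,t}` with `|J| ≤ t - 1`. -/
theorem stmt_11 (Q t n : ℕ) (hQ : 2 ≤ Q) (ht : 2 ≤ t) (htn : t < n) (hn : n ≤ 2 * t)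
    (k : ℕ) (hk : k = 2 * t - n)
    (Φ : (Fin k → Fin Q) → (Fin n → Fin Q) → ℂ)
    (hnorm : ∑ s : Fin k → Fin Q, ∑ w : Fin n → Fin Q,
      Φ s w * (starRingEnd ℂ) (Φ s w) = 1)
    (huniform : TUniform t Φ)
    (T : Finset (Fin n)) (hT : T.card = t) (hTc : Tᶜ.card = n - t)
    (hTsub : ∀ i ∈ T, (i : ℕ) < n - 1)
    (U : Matrix (Fin t → Fin Q) (Fin t → Fin Q) ℂ)
    (hUuni : U ∈ Matrix.unitaryGroup (Fin t → Fin Q) ℂ)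
    (hUstd : ∀ (s : Fin k → Fin Q) (w : Fin n → Fin Q),
      Φ s w = (Real.sqrt ((Q : ℝ) ^ t) : ℂ)⁻¹ *
        U (fun i => w (T.orderEmbOfFin hT i))
          (fun i => Fin.append s (fun j => w (Tᶜ.orderEmbOfFin hTc j))
            (Fin.cast (by omega : t = k + (n - t)) i)))
    (G : Fin (n - t - 1) → Matrix (Fin Q) (Fin Q) ℂ)
    (hG : ∀ i, G i ∈ Matrix.unitaryGroup (Fin Q) ℂ)
    (ε : Fin Q → ℂ) (hε : ∑ m : Fin Q, ε m * (starRingEnd ℂ) (ε m) = 1) :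
    ∀ J : Finset (Fin t), J.Nonempty → J.card ≤ t - 1 →
      Q ^ 2 ≤
        (Matrix.of fun (u : ({i // i ∈ J} → Fin Q) × ({i // i ∈ J} → Fin Q))
            (c : ({i // i ∉ J} → Fin Q) × Fin Q × ({i // i ∉ J} → Fin Q)) =>
          psiOutStd Q t n k (by omega) U G ε ⟨n - t - 1, by omega⟩
            (mergeOn J u.1 c.1) c.2.1 (mergeOn J u.2 c.2.2)).rank := by
  intro J hJ hJc
  have hQ0 : 0 < Q := by omega
  have h1 : t = k + (n - t) := by omega
  have hJpos : 0 < J.card := hJ.card_pos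
  set lst : Fin (n - t) := ⟨n - t - 1, by omega⟩ with hlst
  let f : {j // j ≠ lst} → Fin (n - t - 1) := fun j => ⟨j.1, by
    have h2 := j.2
    have h3 : (j.1 : ℕ) ≠ n - t - 1 := fun h => h2 (Fin.ext h)
    have := j.1.2
    omega⟩
  have hf : ∀ j, (f j : ℕ) = j.1 := fun _ => rfl
  have hQR : (Q : ℝ) ≠ 0 := by exact_mod_cast hQ0.ne'
  have hQC : (Q : ℂ) ≠ 0 := by exact_mod_cast hQ0.ne'
  let P := (Fin k → Fin Q) × ({j // j ≠ lst} → Fin Q)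
  let K : ({i // i ∈ J} → Fin Q) → ({i // i ∉ J} → Fin Q) → Fin Q → P → ℂ :=
    fun a c x p => U (mergeOn J a c) (colIdx h1 lst x p)
  let Gm : P → P → ℂ := fun p q =>
    (if p.1 = q.1 then 1 else 0) * ∏ i, (starRingEnd ℂ) (G (f i) (p.2 i) (q.2 i))
  let V : ({i // i ∈ J} → Fin Q) → ({i // i ∉ J} → Fin Q) → P → ℂ := fun b d p =>
    ∑ q, Gm p q * ∑ y, ε y * (starRingEnd ℂ) (K b d y q)
  let lam : ℝ := (Q : ℝ) ^ (J.card - 1)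
  let μ : ℝ := (Q : ℝ) ^ (t - 1 - J.card)
  have hK2 : ∀ a a' x x', ∑ c, ∑ p, K a c x p * (starRingEnd ℂ) (K a' c x' p)
      = if a = a' ∧ x = x' then (μ : ℂ) else 0 := by
    intro a a' x x'
    let z : {i // i ∉ J} → Fin Q := fun _ => ⟨0, hQ0⟩
    have := unif_col hQ0 htn h1 Φ huniform T hT hTc U hUstd lst J (by omega)
      (mergeOn J a z) (mergeOn J a' z) x x'
    rw [sum_pw J _ _ (fun w w' => ∑ p, U w (colIdx h1 lst x p) *
      (starRingEnd ℂ) (U w' (colIdx h1 lst x' p)))] at this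
    have e : ∀ a : {i // i ∈ J} → Fin Q, (fun i : {i // i ∈ J} => mergeOn J a z i) = a := by
      intro a; funext i; simp [mergeOn]
    rw [e, e] at this
    have hc : (∀ i ∈ J, mergeOn J a z i = mergeOn J a' z i) ↔ a = a' := by
      constructor
      · intro h
        rw [← e a, ← e a']
        funext i
        exact h i i.2
      · rintro rfl; simp
    simp only [hc] at this
    have hpow : (Q : ℂ) * (Q : ℂ) ^ J.card * (Q : ℂ) ^ (t - 1 - J.card) = (Q : ℂ) ^ t := by
      rw [← pow_succ', ← pow_add]; congr 1; omega
    apply mul_left_cancel₀ (mul_ne_zero hQC (pow_ne_zero J.card hQC))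
    rw [mul_assoc]
    refine this.trans ?_
    rw [← hpow]
    simp [μ]
  have hK1 : ∀ c c' x x', ∑ a, ∑ p, K a c x p * (starRingEnd ℂ) (K a c' x' p)
      = if c = c' ∧ x = x' then (lam : ℂ) else 0 := by
    intro a a' x x'
    let z : {i // i ∈ J} → Fin Q := fun _ => ⟨0, hQ0⟩
    have := unif_col hQ0 htn h1 Φ huniform T hT hTc U hUstd lst Jᶜ
      (by rw [Finset.card_compl, Fintype.card_fin]; omega)
      (mergeOn J z a) (mergeOn J z a') x x'
    rw [sum_pw_compl J _ _ (fun w w' => ∑ p, U w (colIdx h1 lst x p) *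
      (starRingEnd ℂ) (U w' (colIdx h1 lst x' p)))] at this
    have e : ∀ a : {i // i ∉ J} → Fin Q, (fun i : {i // i ∉ J} => mergeOn J z a i) = a := by
      intro a; funext i; simp [mergeOn, i.2]
    rw [e, e] at this
    have hc : (∀ i ∈ Jᶜ, mergeOn J z a i = mergeOn J z a' i) ↔ a = a' := by
      constructor
      · intro h
        rw [← e a, ← e a']
        funext i
        exact h i (Finset.mem_compl.2 i.2)
      · rintro rfl; simp
    simp only [hc] at this
    have hpow : (Q : ℂ) * (Q : ℂ) ^ (t - J.card) * (Q : ℂ) ^ (J.card - 1) = (Q : ℂ) ^ t := by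
      rw [← pow_succ', ← pow_add]; congr 1; omega
    apply mul_left_cancel₀ (mul_ne_zero hQC (pow_ne_zero (t - J.card) hQC))
    rw [mul_assoc]
    refine this.trans ?_
    rw [← hpow]
    simp [lam]
  have hV2 := aux_V K Gm ε μ hK2 (Gm_unitary G hG f) hε
  have hK3 : ∀ p p', ∑ x, ∑ a, ∑ c, K a c x p * (starRingEnd ℂ) (K a c x p')
      = if p = p' then ((Fintype.card (Fin Q) : ℝ) : ℂ) else 0 := by
    intro p p'
    have e : ∀ x, ∑ a, ∑ c, K a c x p * (starRingEnd ℂ) (K a c x p')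
        = if p = p' then 1 else 0 := by
      intro x
      rw [← sum_mergeOn J (fun w => U w (colIdx h1 lst x p) *
        (starRingEnd ℂ) (U w (colIdx h1 lst x p')))]
      have := congrFun (congrFun (Matrix.mem_unitaryGroup_iff'.1 hUuni)
        (colIdx h1 lst x p')) (colIdx h1 lst x p)
      simp only [Matrix.mul_apply, Matrix.star_apply, Matrix.one_apply, colIdx_inj] at this
      simp_rw [mul_comm (U _ _)]
      refine this.trans ?_
      simp only [eq_comm]
    simp_rw [e]
    split_ifs <;> simp
  have hκ : ((Real.sqrt ((Q : ℝ) ^ t))⁻¹) ^ 2 = ((Q : ℝ) ^ t)⁻¹ := by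
    rw [inv_pow, Real.sq_sqrt (by positivity)]
  have hQt : (Q : ℝ) ^ t ≠ 0 := pow_ne_zero _ hQR
  have main := aux_main K V ((Real.sqrt ((Q : ℝ) ^ t))⁻¹) lam μ (((Q : ℝ) ^ 2)⁻¹)
    (by positivity) hK1 hV2 hK3
    (by
      rw [hκ]
      apply le_of_eq
      have : lam * μ * (Q : ℝ) ^ 2 = (Q : ℝ) ^ t := by
        simp only [lam, μ]
        rw [← pow_add, ← pow_add]; congr 1; omega
      field_simp
      linarith)
    (by
      rw [hκ]
      have : (Q : ℝ) * μ * (Q : ℝ) ^ J.card = (Q : ℝ) ^ t := by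
        simp only [μ]
        rw [← pow_succ', ← pow_add]; congr 1; omega
      simp only [Fintype.card_fun, Fintype.card_fin, Fintype.card_coe, Nat.cast_pow]
      rw [mul_assoc, mul_assoc, ← mul_assoc (Q : ℝ), this, inv_mul_cancel₀ hQt])
    (Matrix.of fun (u : ({i // i ∈ J} → Fin Q) × ({i // i ∈ J} → Fin Q))
            (c : ({i // i ∉ J} → Fin Q) × Fin Q × ({i // i ∉ J} → Fin Q)) =>
          psiOutStd Q t n k h1 U G ε lst
            (mergeOn J u.1 c.1) c.2.1 (mergeOn J u.2 c.2.2))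
    (fun u c => psi_eq h1 U G ε lst rfl f hf _ _ _)
  rw [← div_eq_mul_inv, le_div_iff₀ (by positivity), one_mul] at main
  exact_mod_cast main
end
end

section
/- Let Φ be a t-uniform purified code state, e ∈ {1,…,n}, and L ⊆ {1,…,n}∖{e} with |L| = t−1. Adjoin a replacement register Ŵ of dimension Q. For unit vectors ζ, ε ∈ ℂ^Q, define χ_in := Φ ⊗ ζ (with ζ on Ŵ) and χ_out := Φ̃ ⊗ ε (with ε on qudit e), where Φ̃ is the state with the same amplitudes as Φ but with the register Ŵ playing the role of the e-th qudit. Then the Schmidt rank of χ_in across the bipartition (qudits in L together with Ŵ | reference register R together with the qudits in {1,…,n}∖L) equals Q^{t−1}, while the Schmidt rank of χ_out across the same bipartition equals Q^t. (These are the Schmidt-rank computations in the proof of Lemma 3.1, which by monotonicity of Schmidt rank under LOCC show that quantum communication between the replacement node and only t−1 of the other nodes cannot correct the erasure of node e in an [[n, 2t−n]]_Q quantum MDS code.) -/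
open scoped BigOperators

noncomputable section

def extF {n Q : ℕ} (L : Finset (Fin n)) (e : Fin n) (p : ({i // i ∈ L} → Fin Q) × Fin Q) :
    {i // i ∈ insert e L} → Fin Q :=
  fun i => if h : i.1 ∈ L then p.1 ⟨i.1, h⟩ else p.2

theorem extF_injective {n Q : ℕ} (L : Finset (Fin n)) (e : Fin n) (heL : e ∉ L) :
    Function.Injective (extF (Q := Q) L e) := by
  rintro ⟨u, m⟩ ⟨v, m'⟩ h
  refine Prod.ext ?_ ?_
  · funext i
    have := congrFun h ⟨i.1, Finset.mem_insert_of_mem i.2⟩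
    simpa [extF] using this
  · have := congrFun h ⟨e, Finset.mem_insert_self e L⟩
    simpa [extF, heL] using this

theorem merge_extF {n Q : ℕ} (L : Finset (Fin n)) (e : Fin n) (heL : e ∉ L) (m0 : Fin Q)
    (p : ({i // i ∈ L} → Fin Q) × Fin Q) (w : {i // i ∉ insert e L} → Fin Q) :
    mergeOn (insert e L) (extF L e p) w =
      Function.update (mergeOn L p.1
        (fun i => if h : i.1 ∈ insert e L then m0 else w ⟨i.1, h⟩)) e p.2 := by
  funext i
  by_cases hie : i = e
  · subst hie
    simp [mergeOn, extF, heL]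
  · by_cases hi : i ∈ L
    · simp [mergeOn, extF, hie, hi]
    · simp [mergeOn, hie, hi]

theorem key_indep {Q t n k : ℕ} (hQ : 0 < Q) (Φ : (Fin k → Fin Q) → (Fin n → Fin Q) → ℂ)
    (huniform : TUniform t Φ) (e : Fin n) (L : Finset (Fin n)) (hL : L.card + 1 = t)
    (heL : e ∉ L) (m0 : Fin Q) (y : ({i // i ∈ L} → Fin Q) × Fin Q → ℂ)
    (hy : ∀ (s : Fin k → Fin Q) (c : {i // i ∉ L} → Fin Q), c ⟨e, heL⟩ = m0 →
      ∑ p, y p * Φ s (Function.update (mergeOn L p.1 c) e p.2) = 0) (q) : y q = 0 := by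
  classical
  have hA := huniform (insert e L) (by rw [Finset.card_insert_of_notMem heL, hL])
  have h1 : ∑ p, y p * rdm Φ (insert e L) (extF L e p) (extF L e q) = 0 := by
    simp only [rdm, Matrix.of_apply, Finset.mul_sum]
    rw [Finset.sum_comm]
    refine Finset.sum_eq_zero fun s _ => ?_
    rw [Finset.sum_comm]
    refine Finset.sum_eq_zero fun w _ => ?_
    simp only [← mul_assoc]
    rw [← Finset.sum_mul]
    simp only [merge_extF L e heL m0]
    rw [hy s _ (by simp), zero_mul]
  rw [hA] at h1
  simp only [Matrix.smul_apply, Matrix.one_apply, (extF_injective L e heL).eq_iff] at h1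
  have hQ' : (Q : ℂ) ≠ 0 := by exact_mod_cast hQ.ne'
  simpa [hQ'] using h1

theorem exists_ne_of_norm {Q : ℕ} (ζ : Fin Q → ℂ)
    (hζ : ∑ m : Fin Q, ζ m * (starRingEnd ℂ) (ζ m) = 1) : ∃ m, ζ m ≠ 0 := by
  by_contra! h
  simp [h] at hζ

/-- Schmidt-rank computations in the proof of Lemma 3.1.  Let `Φ` be a
`t`-uniform purified code state, `e` a qudit and `L` a set of `t-1` other qudits; adjoin a
replacement register `Ŵ` of dimension `Q`.  For unit vectors `ζ, ε ∈ ℂ^Q`, consider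
`χ_in = Φ ⊗ ζ` (with `ζ` on `Ŵ`) and `χ_out = Φ̃ ⊗ ε` (with `Ŵ` playing the role of qudit
`e` and `ε` on qudit `e`).  Across the bipartition `(W_L, Ŵ | R, W_{L^c})` — rows indexed by
assignments to `L` and `Ŵ`, columns by assignments to `R` and the qudits outside `L` — the
Schmidt rank of `χ_in` is `Q^{t-1}` while that of `χ_out` is `Q^t`; by LOCC monotonicity of
the Schmidt rank, `t-1` helper nodes cannot correct the erasure. -/
theorem stmt_12 (Q t n : ℕ) (hQ : 2 ≤ Q) (ht : 1 < t) (htn : t < n) (hn : n ≤ 2 * t)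
    (k : ℕ) (hk : k = 2 * t - n)
    (Φ : (Fin k → Fin Q) → (Fin n → Fin Q) → ℂ)
    (hnorm : ∑ s : Fin k → Fin Q, ∑ w : Fin n → Fin Q,
      Φ s w * (starRingEnd ℂ) (Φ s w) = 1)
    (huniform : TUniform t Φ)
    (e : Fin n) (L : Finset (Fin n)) (hL : L.card = t - 1) (heL : e ∉ L)
    (ζ : Fin Q → ℂ) (hζ : ∑ m : Fin Q, ζ m * (starRingEnd ℂ) (ζ m) = 1)
    (ε : Fin Q → ℂ) (hε : ∑ m : Fin Q, ε m * (starRingEnd ℂ) (ε m) = 1) :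
    -- the Schmidt rank of χ_in = Φ ⊗ ζ across (W_L, Ŵ | R, W_{L^c}) equals Q^(t-1)
    (Matrix.of fun (u : ({i // i ∈ L} → Fin Q) × Fin Q)
        (c : (Fin k → Fin Q) × ({i // i ∉ L} → Fin Q)) =>
      Φ c.1 (mergeOn L u.1 c.2) * ζ u.2).rank = Q ^ (t - 1) ∧
    -- the Schmidt rank of χ_out = Φ̃ ⊗ ε across (W_L, Ŵ | R, W_{L^c}) equals Q^t
    (Matrix.of fun (u : ({i // i ∈ L} → Fin Q) × Fin Q)
        (c : (Fin k → Fin Q) × ({i // i ∉ L} → Fin Q)) =>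
      Φ c.1 (Function.update (mergeOn L u.1 c.2) e u.2) *
        ε (mergeOn L u.1 c.2 e)).rank = Q ^ t := by
  classical
  obtain ⟨m1, hm1⟩ := exists_ne_of_norm ε hε
  have hL' : L.card + 1 = t := by omega
  have key := key_indep (by omega) Φ huniform e L hL' heL
  constructor
  · set N : Matrix ({i // i ∈ L} → Fin Q) ((Fin k → Fin Q) × ({i // i ∉ L} → Fin Q)) ℂ :=
      Matrix.of fun u c => Φ c.1 (mergeOn L u c.2) with hN
    have hNrank : N.rank = Q ^ (t - 1) := by
      have hli : LinearIndependent ℂ N.row := by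
        rw [Fintype.linearIndependent_iff]
        intro x hx u
        have := key m1 (fun p => if p.2 = m1 then x p.1 else 0) (by
          intro s c hc
          have h := congrFun hx (s, c)
          rw [Fintype.sum_prod_type]
          simp only [ite_mul, zero_mul, Finset.sum_ite_eq', Finset.sum_ite_eq, Finset.mem_univ,
            if_true]
          simp only [Finset.sum_apply, Pi.smul_apply, smul_eq_mul, Pi.zero_apply, hN,
            Matrix.row, Matrix.of_apply] at h
          rw [← h]
          refine Finset.sum_congr rfl fun v _ => ?_
          congr 2
          rw [Function.update_eq_self_iff]
          simp [mergeOn, heL, hc]) (u, m1)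
        simpa using this
      rw [hli.rank_matrix]
      simp [hL]
    rw [← hNrank]
    apply le_antisymm
    · have : (Matrix.of fun (u : ({i // i ∈ L} → Fin Q) × Fin Q)
          (c : (Fin k → Fin Q) × ({i // i ∉ L} → Fin Q)) =>
          Φ c.1 (mergeOn L u.1 c.2) * ζ u.2) =
          (Matrix.of fun (u : ({i // i ∈ L} → Fin Q) × Fin Q) (v : {i // i ∈ L} → Fin Q) =>
            if u.1 = v then ζ u.2 else 0) * N := by
        ext u c
        simp [Matrix.mul_apply, hN, mul_comm]
      rw [this]
      exact Matrix.rank_mul_le_right _ _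
    · have : N = (Matrix.of fun (v : {i // i ∈ L} → Fin Q) (u : ({i // i ∈ L} → Fin Q) × Fin Q) =>
            if v = u.1 then (starRingEnd ℂ) (ζ u.2) else 0) *
          (Matrix.of fun (u : ({i // i ∈ L} → Fin Q) × Fin Q)
          (c : (Fin k → Fin Q) × ({i // i ∉ L} → Fin Q)) =>
          Φ c.1 (mergeOn L u.1 c.2) * ζ u.2) := by
        ext u c
        rw [Matrix.mul_apply, Fintype.sum_prod_type, Finset.sum_eq_single u]
        · simp only [Matrix.of_apply, if_true, hN]
          refine (mul_one _).symm.trans ?_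
          rw [← hζ, Finset.mul_sum]
          refine Finset.sum_congr rfl fun m _ => ?_
          ring
        · intro v _ hv
          simp [hv.symm]
        · simp
      conv_lhs => rw [this]
      exact Matrix.rank_mul_le_right _ _
  · set M := (Matrix.of fun (u : ({i // i ∈ L} → Fin Q) × Fin Q)
        (c : (Fin k → Fin Q) × ({i // i ∉ L} → Fin Q)) =>
      Φ c.1 (Function.update (mergeOn L u.1 c.2) e u.2) *
        ε (mergeOn L u.1 c.2 e)) with hM
    have hli : LinearIndependent ℂ M.row := by
      rw [Fintype.linearIndependent_iff]
      intro x hx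
      refine key m1 x fun s c hc => ?_
      have h := congrFun hx (s, c)
      have hme : ∀ u, mergeOn L u c e = m1 := fun u => by simp [mergeOn, heL, hc]
      simp only [Finset.sum_apply, Pi.smul_apply, smul_eq_mul, Pi.zero_apply, hM,
            Matrix.row, Matrix.of_apply, hme, ← mul_assoc] at h
      rw [← Finset.sum_mul] at h
      exact (mul_eq_zero.mp h).resolve_right hm1
    rw [hli.rank_matrix]
    simp only [Fintype.card_prod, Fintype.card_fun, Fintype.card_fin, Fintype.card_coe, ← hL']
    rw [pow_succ]
end
end
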